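/- arXiv:1207.1232 — 3 statements merged into one kernel-verified Lean document; each statement's English description precedes it below -/
import Mathlib

section
/- Let φ be a Schur function with φ(0) = 0 such that C_φ is a compact operator on 𝒟_*. Then lim_{|a|→1⁻} [log(1/(1 − |φ(a)|²))] / [log(1/(1 − |a|²))] = 0. -/
/-!
Write `Λ(a) = log (1 / (1 - |a|²))`. This is the squared norm of the reproducing kernel
`k_a(z) = log (1 / (1 - ā z))` of `𝒟_*`, and `‖k_w‖² = k_w(w) = Λ(w)`. The claim is
`Λ(φ(a)) / Λ(a) → 0`.

Orthogonality of the monomials (`lintegral_disk`) gives `‖f‖² = ∑ n |c_n|²` in terms of Taylor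
coefficients. Hence `|f(a)|² ≤ ‖f‖² Λ(a)` for `f ∈ 𝒟_*` by Cauchy–Schwarz, and applying this to
tails of the Taylor series shows `f(a) = o(√Λ(a))` for each fixed `f` (`eventually_norm_le`).

Compactness upgrades this to a bound uniform in `f`. For `ε > 0` a finite-rank `R` approximates
`C_φ` to within `ε`, so `‖C_φ k‖ ≤ ε ‖k‖` on the finite-codimensional space `ker R`. By
`exists_finite_net` the unit ball lies in `F + ker R` up to a small error, with `F` a finite set.
So each `C_φ f` with `‖f‖ ≤ 1` is within `5 ε` of one of finitely many fixed functions, whence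
`|f(φ(a))| ≤ 6 ε √Λ(a)` for all such `f` once `|a|` is close to `1` (`eventually_uniform`).
The choice `f = k_{φ(a)} / ‖k_{φ(a)}‖` turns this into `√Λ(φ(a)) ≤ 6 ε √Λ(a)`.
-/

open Complex MeasureTheory Metric Set Filter Topology
open scoped ENNReal NNReal

noncomputable section

/-- Normalized area measure `dA = dx dy / π` on `ℂ`. -/
def nA : Measure ℂ := (ENNReal.ofReal Real.pi)⁻¹ • volume

/-- The open unit disk `D ⊆ ℂ`. -/
def uD : Set ℂ := Metric.ball (0 : ℂ) 1

/-- A Schur function: an analytic self-map of the open unit disk. -/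
def IsSchur (φ : ℂ → ℂ) : Prop :=
  DifferentiableOn ℂ φ uD ∧ Set.MapsTo φ uD uD

/-- Squared norm of `f` in the weighted Dirichlet space `𝒟_α`, with value in `[0,∞]`:
`‖f‖_α² = |f(0)|² + (α+1) ∫_D |f′(z)|² (1−|z|²)^α dA(z)`. -/
def eDNormSqW (α : ℝ) (f : ℂ → ℂ) : ℝ≥0∞ :=
  ENNReal.ofReal (‖f 0‖ ^ 2) +
    ∫⁻ z in uD, ENNReal.ofReal ((α + 1) * ‖deriv f z‖ ^ 2 * (1 - ‖z‖ ^ 2) ^ α) ∂nA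

/-- Squared Dirichlet norm: `‖f‖² = |f(0)|² + ∫_D |f′(z)|² dA(z)`. -/
def eDNormSq (f : ℂ → ℂ) : ℝ≥0∞ := eDNormSqW 0 f

/-- Membership in the weighted Dirichlet space `𝒟_α`. -/
def MemDW (α : ℝ) (f : ℂ → ℂ) : Prop :=
  DifferentiableOn ℂ f uD ∧ eDNormSqW α f < ⊤

/-- Membership in `𝒟_{α,*}`. -/
def MemDWStar (α : ℝ) (f : ℂ → ℂ) : Prop := MemDW α f ∧ f 0 = 0

/-- Membership in the Dirichlet space `𝒟`. -/
def MemD (f : ℂ → ℂ) : Prop := MemDW 0 f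

/-- Membership in `𝒟_*`. -/
def MemDStar (f : ℂ → ℂ) : Prop := MemDWStar 0 f

/-- The composition operator `C_φ f = f ∘ φ`. -/
def compOp (φ : ℂ → ℂ) : (ℂ → ℂ) → ℂ → ℂ := fun f z => f (φ z)

/-- Operator norm of `T` with respect to the space `{f | Mem f}` with squared norm `NSq`:
the least `C` such that `‖T f‖² ≤ C² ‖f‖²` for all `f` in the space (`⊤` if none). -/
def eOpNorm (Mem : (ℂ → ℂ) → Prop) (NSq : (ℂ → ℂ) → ℝ≥0∞)
    (T : (ℂ → ℂ) → ℂ → ℂ) : ℝ≥0∞ :=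
  sInf {C : ℝ≥0∞ | ∀ f, Mem f → NSq (T f) ≤ C ^ 2 * NSq f}

/-- The `n`-th approximation number `a_n(T) = inf {‖T − R‖ : rank R < n}`. -/
def eApproxNum (Mem : (ℂ → ℂ) → Prop) (NSq : (ℂ → ℂ) → ℝ≥0∞)
    (T : (ℂ → ℂ) → ℂ → ℂ) (n : ℕ) : ℝ≥0∞ :=
  sInf {c : ℝ≥0∞ | ∃ R : (ℂ → ℂ) →ₗ[ℂ] (ℂ → ℂ),
    Module.rank ℂ (LinearMap.range R) < (n : Cardinal) ∧
    c = eOpNorm Mem NSq (fun f z => T f z - R f z)}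

/-- `T` is a bounded operator on the space `{f | Mem f}` with squared norm `NSq`. -/
def IsBoundedOpOn (Mem : (ℂ → ℂ) → Prop) (NSq : (ℂ → ℂ) → ℝ≥0∞)
    (T : (ℂ → ℂ) → ℂ → ℂ) : Prop :=
  (∀ f, Mem f → Mem (T f)) ∧ eOpNorm Mem NSq T ≠ ⊤

/-- `T` is a compact operator on the space `{f | Mem f}`: it is bounded and its
approximation numbers tend to `0` (the standard characterization of compactness
for operators on a Hilbert space). -/
def IsCompactOpOn (Mem : (ℂ → ℂ) → Prop) (NSq : (ℂ → ℂ) → ℝ≥0∞)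
    (T : (ℂ → ℂ) → ℂ → ℂ) : Prop :=
  IsBoundedOpOn Mem NSq T ∧
    Filter.Tendsto (fun n => eApproxNum Mem NSq T n) Filter.atTop (𝓝 0)

/-- `T` belongs to the Schatten class `S_p` of the space `{f | Mem f}`:
`Σ_{n≥1} a_n(T)^p < ∞`. -/
def MemSchattenOn (Mem : (ℂ → ℂ) → Prop) (NSq : (ℂ → ℂ) → ℝ≥0∞)
    (T : (ℂ → ℂ) → ℂ → ℂ) (p : ℝ) : Prop :=
  IsBoundedOpOn Mem NSq T ∧
    ∑' n : ℕ, (eApproxNum Mem NSq T (n + 1)) ^ p ≠ ⊤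

/-- `C_φ` belongs to the Schatten class `S_p(𝒟_*)`. -/
def MemSchattenD (p : ℝ) (φ : ℂ → ℂ) : Prop :=
  MemSchattenOn MemDStar eDNormSq (compOp φ) p

/-- `C_φ` is a Hilbert–Schmidt operator on `𝒟_*`: it is bounded and
`Σ_n ‖C_φ e_n‖² < ∞` for the orthonormal basis `e_n(z) = zⁿ/√n`, `n ≥ 1`, of `𝒟_*`
(equivalently, for every orthonormal basis). -/
def HilbertSchmidtOnDStar (φ : ℂ → ℂ) : Prop :=
  IsBoundedOpOn MemDStar eDNormSq (compOp φ) ∧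
    ∑' n : ℕ, eDNormSq (fun z => φ z ^ (n + 1) / (Real.sqrt (n + 1) : ℂ)) ≠ ⊤

/-- Squared Hardy norm `‖f‖² = sup_{0≤r<1} (1/2π) ∫_0^{2π} |f(r e^{it})|² dt`. -/
def eHardyNormSq (f : ℂ → ℂ) : ℝ≥0∞ :=
  ⨆ r : Set.Ico (0 : ℝ) 1,
    (∫⁻ t in Set.Ioc 0 (2 * Real.pi),
      ENNReal.ofReal (‖f ((r : ℝ) * Complex.exp (t * Complex.I))‖ ^ 2)) /
        ENNReal.ofReal (2 * Real.pi)

/-- Membership in the Hardy space `H²`. -/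
def MemHardy (f : ℂ → ℂ) : Prop := DifferentiableOn ℂ f uD ∧ eHardyNormSq f < ⊤

/-- Squared Bergman norm `‖f‖² = ∫_D |f|² dA`. -/
def eBergNormSq (f : ℂ → ℂ) : ℝ≥0∞ := ∫⁻ z in uD, ENNReal.ofReal (‖f z‖ ^ 2) ∂nA

/-- Membership in the Bergman space `𝔅²`. -/
def MemBerg (f : ℂ → ℂ) : Prop := DifferentiableOn ℂ f uD ∧ eBergNormSq f < ⊤

/-- The logarithmic energy `I_μ = ∬ log(e/|z−w|) dμ(z) dμ(w)` of a measure on the circle. -/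
def eEnergy (μ : Measure ℂ) : ℝ≥0∞ :=
  ∫⁻ z, ∫⁻ w, ENNReal.ofReal (Real.log (Real.exp 1 / dist z w)) ∂μ ∂μ

/-- A Borel set `E` (contained in the unit circle) has logarithmic capacity zero iff
`I_μ = ∞` for every Borel probability measure `μ` with compact support contained in `E`. -/
def HasLogCapacityZero (E : Set ℂ) : Prop :=
  ∀ μ : Measure ℂ, IsProbabilityMeasure μ →
    (∃ K, IsCompact K ∧ K ⊆ E ∧ μ Kᶜ = 0) → eEnergy μ = ⊤

/-- The weighted Nevanlinna counting function `N_{φ,α}(w) = Σ_{z∈D, φ(z)=w} (1−|z|²)^α`. -/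
def nevanlinnaE (φ : ℂ → ℂ) (α : ℝ) (w : ℂ) : ℝ≥0∞ :=
  ∑' z : {z : ℂ // z ∈ uD ∧ φ z = w}, ENNReal.ofReal ((1 - ‖(z : ℂ)‖ ^ 2) ^ α)

/-- The Carleson window `W(ξ,h)`. -/
def carlesonW (ξ : ℂ) (h : ℝ) : Set ℂ :=
  {w ∈ uD | 1 - ‖w‖ ≤ h ∧ |Complex.arg (w * (starRingEnd ℂ) ξ)| ≤ Real.pi * h}

/-- Argument normalized to lie in `[0, 2π)`. -/
def argNN (z : ℂ) : ℝ :=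
  if 0 ≤ Complex.arg z then Complex.arg z else Complex.arg z + 2 * Real.pi

/-- The Hastings–Luecking window `R_{n,j}`. -/
def HLwindow (n j : ℕ) : Set ℂ :=
  {z ∈ uD | 1 - ((2 : ℝ) ^ n)⁻¹ ≤ ‖z‖ ∧ ‖z‖ < 1 - ((2 : ℝ) ^ (n + 1))⁻¹ ∧
    2 * j * Real.pi / 2 ^ n ≤ argNN z ∧ argNN z < 2 * (j + 1) * Real.pi / 2 ^ n}

/-- `g` is an a.e. radial limit function of `φ`:
for a.e. `t`, `φ(r e^{it}) → g(t)` as `r → 1⁻`. -/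
def IsRadialLimit (φ : ℂ → ℂ) (g : ℝ → ℂ) : Prop :=
  ∀ᵐ t : ℝ, Filter.Tendsto (fun r : ℝ => φ ((r : ℂ) * Complex.exp (t * Complex.I)))
    (𝓝[<] (1 : ℝ)) (𝓝 (g t))

/-! ### Parseval's identity on circles and on the disk -/

theorem integral_exp_int_mul (k : ℤ) :
    ∫ θ in (-Real.pi)..Real.pi, cexp (k * I * θ) = if k = 0 then 2 * (Real.pi : ℂ) else 0 := by
  split_ifs with h
  · subst h
    simp
    ring
  · have hk : (k : ℂ) * I ≠ 0 := by simp [h]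
    rw [integral_exp_mul_complex hk]
    have : cexp (k * I * Real.pi) = cexp (k * I * ((-Real.pi : ℝ) : ℂ)) := by
      rw [Complex.exp_eq_exp_iff_exists_int]
      exact ⟨k, by push_cast; ring⟩
    rw [this, sub_self, zero_div]

theorem norm_exp_nat_mul_I (n : ℕ) (θ : ℝ) : ‖cexp (n * I * θ)‖ = 1 := by
  have : (n * I * θ : ℂ) = ((n * θ : ℝ) : ℂ) * I := by push_cast; ring
  rw [this, Complex.norm_exp_ofReal_mul_I]

theorem hasSum_integral_trig {u : ℕ → ℂ} (hu : Summable fun n => ‖u n‖) {F G : ℝ → ℂ}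
    (hG : Continuous G) (hF : ∀ θ : ℝ, HasSum (fun n : ℕ => u n * cexp (n * I * θ)) (F θ)) :
    HasSum (fun n : ℕ => u n * ∫ θ in (-Real.pi)..Real.pi, cexp (n * I * θ) * G θ)
      (∫ θ in (-Real.pi)..Real.pi, F θ * G θ) := by
  have := intervalIntegral.hasSum_integral_of_dominated_convergence (μ := volume)
    (a := -Real.pi) (b := Real.pi)
    (F := fun (n : ℕ) (θ : ℝ) => u n * cexp (n * I * θ) * G θ) (f := fun θ => F θ * G θ)
    (fun n θ => ‖u n‖ * ‖G θ‖) ?_ ?_ ?_ ?_ ?_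
  · simpa only [mul_assoc, intervalIntegral.integral_const_mul] using this
  · intro n
    exact (by fun_prop : Continuous fun θ : ℝ => u n * cexp (n * I * θ) * G θ).aestronglyMeasurable
  · intro n
    refine Filter.Eventually.of_forall fun θ _ => ?_
    simp [norm_exp_nat_mul_I]
  · exact Filter.Eventually.of_forall fun θ _ => hu.mul_right _
  · simp_rw [tsum_mul_right]
    exact (by fun_prop : Continuous fun θ : ℝ => (∑' n, ‖u n‖) * ‖G θ‖).intervalIntegrable _ _
  · exact Filter.Eventually.of_forall fun θ _ => (hF θ).mul_right _

/-- Parseval's identity for an absolutely convergent one-sided trigonometric series. -/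
theorem hasSum_integral_norm_sq {u : ℕ → ℂ} (hu : Summable fun n => ‖u n‖) {F : ℝ → ℂ}
    (hFc : Continuous F)
    (hF : ∀ θ : ℝ, HasSum (fun n : ℕ => u n * cexp (n * I * θ)) (F θ)) :
    HasSum (fun n : ℕ => 2 * Real.pi * ‖u n‖ ^ 2)
      (∫ θ in (-Real.pi)..Real.pi, ‖F θ‖ ^ 2) := by
  have coeff : ∀ m : ℕ, ∫ θ in (-Real.pi)..Real.pi, F θ * cexp (-(m * I * θ))
      = 2 * Real.pi * u m := by
    intro m
    have h1 := hasSum_integral_trig hu (G := fun θ : ℝ => cexp (-(m * I * θ)))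
      (by fun_prop) hF
    have h2 : (fun n : ℕ => u n * ∫ θ in (-Real.pi)..Real.pi,
        cexp (n * I * θ) * cexp (-(m * I * θ)))
        = fun n : ℕ => if n = m then 2 * Real.pi * u m else 0 := by
      funext n
      have h3 : ∀ θ : ℝ, cexp (n * I * θ) * cexp (-(m * I * θ))
          = cexp (((n - m : ℤ) : ℂ) * I * θ) := by
        intro θ
        rw [← Complex.exp_add]
        congr 1
        push_cast
        ring
      simp_rw [h3]
      rw [integral_exp_int_mul]
      by_cases hnm : n = m
      · subst hnm
        simp
        ring
      · have : (n : ℤ) - m ≠ 0 := by omega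
        simp [hnm, this]
    rw [h2] at h1
    exact h1.unique (hasSum_ite_eq m _)
  have h1 := hasSum_integral_trig hu (G := fun θ => (starRingEnd ℂ) (F θ))
    (by fun_prop) hF
  have h2 : (fun n : ℕ => u n * ∫ θ in (-Real.pi)..Real.pi,
      cexp (n * I * θ) * (starRingEnd ℂ) (F θ))
      = fun n : ℕ => ((2 * Real.pi * ‖u n‖ ^ 2 : ℝ) : ℂ) := by
    funext n
    have h3 : ∀ θ : ℝ, cexp (n * I * θ) * (starRingEnd ℂ) (F θ)
        = (starRingEnd ℂ) (F θ * cexp (-(n * I * θ))) := by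
      intro θ
      rw [map_mul, ← Complex.exp_conj, mul_comm]
      simp
    simp_rw [h3]
    rw [intervalIntegral.integral_of_le (by linarith [Real.pi_pos]), integral_conj,
      ← intervalIntegral.integral_of_le (by linarith [Real.pi_pos]), coeff]
    push_cast
    rw [← Complex.mul_conj', map_mul, map_mul, Complex.conj_ofReal, map_ofNat]
    ring
  rw [h2] at h1
  have h4 : ∫ θ in (-Real.pi)..Real.pi, F θ * (starRingEnd ℂ) (F θ)
      = ((∫ θ in (-Real.pi)..Real.pi, ‖F θ‖ ^ 2 : ℝ) : ℂ) := by
    rw [← intervalIntegral.integral_ofReal]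
    congr 1
    funext θ
    rw [Complex.mul_conj']
    push_cast
    rfl
  rw [h4] at h1
  exact_mod_cast h1

theorem summable_norm_coeff {h : ℂ → ℂ} {b : ℕ → ℂ}
    (hb : ∀ z ∈ uD, HasSum (fun n => b n * z ^ n) (h z)) {r : ℝ} (hr0 : 0 ≤ r) (hr : r < 1) :
    Summable fun n => ‖b n * (r : ℂ) ^ n‖ := by
  have hz : (r : ℂ) ∈ uD := by simp [uD, abs_of_nonneg hr0, hr]
  exact (hb _ hz).summable.norm

theorem lintegral_circle {h : ℂ → ℂ} {b : ℕ → ℂ} (hc : ContinuousOn h uD)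
    (hb : ∀ z ∈ uD, HasSum (fun n => b n * z ^ n) (h z)) {r : ℝ} (hr0 : 0 ≤ r) (hr : r < 1) :
    ∫⁻ θ in Ioo (-Real.pi) Real.pi, ENNReal.ofReal
        (‖h (r * (Real.cos θ + Real.sin θ * I))‖ ^ 2)
      = ∑' n : ℕ, ENNReal.ofReal (2 * Real.pi * ‖b n‖ ^ 2 * r ^ (2 * n)) := by
  have hpi := Real.pi_pos
  have hz : ∀ θ : ℝ, (r * (Real.cos θ + Real.sin θ * I) : ℂ) ∈ uD := by
    intro θ
    simp only [uD, mem_ball_zero_iff, norm_mul]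
    rw [Complex.ofReal_cos, Complex.ofReal_sin, Complex.norm_cos_add_sin_mul_I]
    simp [abs_of_nonneg hr0, hr]
  have hFc : Continuous fun θ : ℝ => h (r * (Real.cos θ + Real.sin θ * I)) :=
    hc.comp_continuous (by fun_prop) hz
  have hF : ∀ θ : ℝ, HasSum (fun n : ℕ => (b n * (r : ℂ) ^ n) * cexp (n * I * θ))
      (h (r * (Real.cos θ + Real.sin θ * I))) := by
    intro θ
    convert hb _ (hz θ) using 2 with n
    rw [mul_pow, Complex.ofReal_cos, Complex.ofReal_sin, ← Complex.exp_mul_I, ← Complex.exp_nat_mul,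
      mul_assoc]
    congr 3
    ring
  have key := hasSum_integral_norm_sq (summable_norm_coeff hb hr0 hr) hFc hF
  rw [← ofReal_integral_eq_lintegral_ofReal, ← integral_Ioc_eq_integral_Ioo,
    ← intervalIntegral.integral_of_le (by linarith), ← key.tsum_eq,
    ENNReal.ofReal_tsum_of_nonneg (fun n => by positivity) key.summable]
  · congr 1
    funext n
    rw [norm_mul, norm_pow, Complex.norm_real, Real.norm_of_nonneg hr0]
    ring_nf
  · exact ((hFc.norm.pow 2).integrableOn_Icc).mono_set Ioo_subset_Icc_self
  · exact Filter.Eventually.of_forall fun θ => by positivity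

theorem lintegral_pow (c : ℝ) (hc : 0 ≤ c) (m : ℕ) :
    ∫⁻ r in Ioo (0:ℝ) 1, ENNReal.ofReal (c * r ^ m) = ENNReal.ofReal (c / (m + 1)) := by
  rw [← ofReal_integral_eq_lintegral_ofReal, ← integral_Ioc_eq_integral_Ioo,
    ← intervalIntegral.integral_of_le zero_le_one, intervalIntegral.integral_const_mul,
    integral_pow]
  · congr 1
    simp
    ring
  · exact ((by fun_prop : Continuous fun r : ℝ => c * r ^ m).integrableOn_Icc).mono_set
      Ioo_subset_Icc_self
  · refine (ae_restrict_iff' measurableSet_Ioo).2 (Filter.Eventually.of_forall fun r hr => ?_)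
    have := hr.1
    simp only [Pi.zero_apply]
    positivity

/-- The Bergman norm in terms of Taylor coefficients: the monomials are orthogonal on the disk, with
`∫_D |zⁿ|² dA = 1 / (n + 1)`. -/
theorem lintegral_disk {h : ℂ → ℂ} {b : ℕ → ℂ} (hc : ContinuousOn h uD)
    (hb : ∀ z ∈ uD, HasSum (fun n => b n * z ^ n) (h z)) :
    ∫⁻ z in uD, ENNReal.ofReal (‖h z‖ ^ 2) ∂nA
      = ∑' n : ℕ, ENNReal.ofReal (‖b n‖ ^ 2 / (n + 1)) := by
  classical
  have hpi := Real.pi_pos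
  have hm : MeasurableSet uD := measurableSet_ball
  set g : ℂ → ℝ≥0∞ := uD.indicator fun z => ENNReal.ofReal (‖h z‖ ^ 2) with hg
  have hgm : Measurable g := by
    rw [hg, ← Set.piecewise_eq_indicator]
    refine ContinuousOn.measurable_piecewise ?_ continuousOn_const hm
    exact ENNReal.continuous_ofReal.comp_continuousOn (hc.norm.pow 2)
  have h1 : ∫⁻ z in uD, ENNReal.ofReal (‖h z‖ ^ 2)
      = ∑' n : ℕ, ENNReal.ofReal (Real.pi * (‖b n‖ ^ 2 / (n + 1))) := by
    rw [← lintegral_indicator hm, ← Complex.lintegral_comp_polarCoord_symm]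
    rw [show polarCoord.target = Set.Ioi (0 : ℝ) ×ˢ Set.Ioo (-Real.pi) Real.pi from rfl,
      Measure.volume_eq_prod, ← Measure.prod_restrict, lintegral_prod]
    swap
    · refine Measurable.aemeasurable ?_
      refine (by fun_prop : Measurable fun p : ℝ × ℝ => ENNReal.ofReal p.1).smul (hgm.comp ?_)
      have : (fun p : ℝ × ℝ => Complex.polarCoord.symm p)
          = fun p : ℝ × ℝ => (p.1 * (Real.cos p.2 + Real.sin p.2 * Complex.I) : ℂ) :=
        funext Complex.polarCoord_symm_apply
      change Measurable fun p : ℝ × ℝ => Complex.polarCoord.symm p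
      rw [this]
      exact (by fun_prop : Continuous fun p : ℝ × ℝ =>
        (p.1 * (Real.cos p.2 + Real.sin p.2 * Complex.I) : ℂ)).measurable
    have h2 : ∀ r ∈ Ioi (0:ℝ), (∫⁻ θ in Ioo (-Real.pi) Real.pi,
        ENNReal.ofReal (r, θ).1 • g (Complex.polarCoord.symm (r, θ)))
        = (Ioo (0:ℝ) 1).indicator (fun r => ∑' n : ℕ,
            ENNReal.ofReal (2 * Real.pi * ‖b n‖ ^ 2 * r ^ (2 * n + 1))) r := by
      intro r hr
      have hr : 0 < r := hr
      by_cases hr1 : r < 1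
      · rw [Set.indicator_of_mem (show r ∈ Ioo (0:ℝ) 1 from ⟨hr, hr1⟩)]
        have h3 : ∀ θ : ℝ, g (Complex.polarCoord.symm (r, θ)) = ENNReal.ofReal
            (‖h (r * (Real.cos θ + Real.sin θ * I))‖ ^ 2) := by
          intro θ
          rw [hg, Set.indicator_of_mem, Complex.polarCoord_symm_apply]
          simp only [uD, mem_ball_zero_iff]
          rw [Complex.norm_polarCoord_symm]
          simpa [abs_of_pos hr] using hr1
        simp_rw [h3, smul_eq_mul]
        rw [lintegral_const_mul' _ _ ENNReal.ofReal_ne_top, lintegral_circle hc hb hr.le hr1,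
          ← ENNReal.tsum_mul_left]
        congr 1
        funext n
        rw [← ENNReal.ofReal_mul hr.le]
        congr 1
        ring
      · rw [Set.indicator_of_notMem (by simp [hr1])]
        have h3 : ∀ θ : ℝ, g (Complex.polarCoord.symm (r, θ)) = 0 := by
          intro θ
          rw [hg, Set.indicator_of_notMem]
          simp only [uD, mem_ball_zero_iff]
          rw [Complex.norm_polarCoord_symm]
          simpa [abs_of_pos hr] using hr1
        simp only [h3, smul_zero, lintegral_zero]
    rw [setLIntegral_congr_fun measurableSet_Ioi h2, lintegral_indicator measurableSet_Ioo,
      Measure.restrict_restrict measurableSet_Ioo,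
      Set.inter_eq_left.2 (fun x hx => hx.1), lintegral_tsum]
    · congr 1
      funext n
      rw [lintegral_pow _ (by positivity)]
      congr 1
      push_cast
      field_simp
      ring
    · intro n
      exact (by fun_prop : Measurable fun r : ℝ =>
        ENNReal.ofReal (2 * Real.pi * ‖b n‖ ^ 2 * r ^ (2 * n + 1))).aemeasurable
  rw [nA, Measure.restrict_smul, lintegral_smul_measure, h1, smul_eq_mul, ← ENNReal.tsum_mul_left]
  congr 1
  funext n
  rw [ENNReal.ofReal_mul hpi.le, ← mul_assoc, ENNReal.inv_mul_cancel, one_mul]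
  · simpa using hpi
  · exact ENNReal.ofReal_ne_top

theorem hasSum_of_eq {E : Type*} [AddCommMonoid E] [TopologicalSpace E] {f g : ℕ → E} {x : E}
    (e : ∀ n, f n = g n) (h : HasSum g x) : HasSum f x := (funext e : f = g) ▸ h

/-! ### The Dirichlet norm and pointwise estimates -/

theorem eDNormSq_eq {f : ℂ → ℂ} (h : f 0 = 0) :
    eDNormSq f = ∫⁻ z in uD, ENNReal.ofReal (‖deriv f z‖ ^ 2) ∂nA := by
  simp [eDNormSq, eDNormSqW, h]

theorem eDNormSq_eq_tsum {f : ℂ → ℂ} (h : f 0 = 0) (hd : DifferentiableOn ℂ f uD) {b : ℕ → ℂ}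
    (hb : ∀ z ∈ uD, HasSum (fun n => b n * z ^ n) (deriv f z)) :
    eDNormSq f = ∑' n : ℕ, ENNReal.ofReal (‖b n‖ ^ 2 / (n + 1)) := by
  rw [eDNormSq_eq h]
  exact lintegral_disk (hd.deriv isOpen_ball).continuousOn hb

/-- Taylor coefficients `d n` (of `z ^ (n + 1)`) of an element of `𝒟_*`, together with the
coefficient formula `∑ (n + 1) |d n|²` for its squared norm. -/
theorem exists_coeff {f : ℂ → ℂ} (hf : MemDStar f) : ∃ d : ℕ → ℂ,
    (∀ z ∈ uD, HasSum (fun n => d n * z ^ (n + 1)) (f z)) ∧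
    HasSum (fun n : ℕ => (n + 1) * ‖d n‖ ^ 2) (eDNormSq f).toReal := by
  obtain ⟨⟨hd, hfin⟩, h0⟩ := hf
  have hfin : eDNormSq f < ⊤ := hfin
  refine ⟨fun n => ((n + 1).factorial : ℂ)⁻¹ * iteratedDeriv (n + 1) f 0, ?_, ?_⟩
  · intro z hz
    have h1 := hasSum_taylorSeries_on_ball hd hz
    rw [← hasSum_nat_add_iff' 1] at h1
    simp only [Finset.range_one, Finset.sum_singleton, iteratedDeriv_zero, h0,
      sub_zero, smul_eq_mul, mul_zero] at h1
    refine hasSum_of_eq (fun n => ?_) h1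
    ring
  · have hb : ∀ z ∈ uD, HasSum
        (fun n : ℕ => ((n.factorial : ℂ)⁻¹ * iteratedDeriv (n + 1) f 0) * z ^ n) (deriv f z) := by
      intro z hz
      have h1 := hasSum_taylorSeries_on_ball (hd.deriv isOpen_ball) hz
      refine hasSum_of_eq (fun n => ?_) h1
      rw [iteratedDeriv_succ']
      simp only [sub_zero, smul_eq_mul]
      ring
    have h2 := eDNormSq_eq_tsum h0 hd hb
    rw [h2] at hfin
    have h3 := ENNReal.hasSum_toReal hfin.ne
    rw [h2]
    rw [ENNReal.tsum_toReal_eq fun n => ENNReal.ofReal_ne_top]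
    refine hasSum_of_eq (fun n => ?_) h3
    rw [ENNReal.toReal_ofReal (by positivity)]
    simp only [Nat.factorial_succ]
    simp only [norm_mul, norm_inv, Nat.cast_mul, norm_natCast]
    push_cast
    have : ((n.factorial : ℕ) : ℝ) ≠ 0 := by positivity
    field_simp

/-- `Λ a = log (1 / (1 - |a|²))`, the squared norm of the reproducing kernel of `𝒟_*` at `a`. -/
def Lam (a : ℂ) : ℝ := Real.log (1 / (1 - ‖a‖ ^ 2))

theorem hasSum_Lam {a : ℂ} (ha : a ∈ uD) :
    HasSum (fun n : ℕ => ‖a‖ ^ (2 * (n + 1)) / (n + 1)) (Lam a) := by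
  have ha : ‖a‖ < 1 := by simpa [uD] using ha
  have h1 : |‖a‖ ^ 2| < 1 := by
    rw [abs_of_nonneg (by positivity)]
    exact pow_lt_one₀ (norm_nonneg _) ha two_ne_zero
  convert Real.hasSum_pow_div_log_of_abs_lt_one h1 using 2 with n
  · rw [pow_mul]
  · simp [Lam]

theorem Lam_nonneg {a : ℂ} (ha : a ∈ uD) : 0 ≤ Lam a :=
  (hasSum_Lam ha).nonneg fun n => by positivity

/-- Cauchy–Schwarz on the Taylor series from index `N` on, against `∑ |a|^(2n+2) / (n + 1) = Λ a`;
`δ` bounds the norm of the tail. -/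
theorem tail_bound {f : ℂ → ℂ} {d : ℕ → ℂ}
    (hd : ∀ z ∈ uD, HasSum (fun n => d n * z ^ (n + 1)) (f z)) {N : ℕ} {δ : ℝ} (hδ : 0 ≤ δ)
    (hN : ∀ m, N ≤ m → ∑ n ∈ Finset.Ico N m, ((n : ℝ) + 1) * ‖d n‖ ^ 2 ≤ δ ^ 2)
    {a : ℂ} (ha : a ∈ uD) :
    ‖f a‖ ≤ ∑ n ∈ Finset.range N, ‖d n‖ + δ * √(Lam a) := by
  have ha1 : ‖a‖ < 1 := by simpa [uD] using ha
  refine le_of_tendsto (hd a ha).tendsto_sum_nat.norm ?_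
  filter_upwards [eventually_ge_atTop N] with m hm
  refine (norm_sum_le _ _).trans ?_
  rw [← Finset.sum_range_add_sum_Ico _ hm]
  gcongr with n hn
  · rw [norm_mul, norm_pow]
    exact mul_le_of_le_one_right (norm_nonneg _) (pow_le_one₀ (norm_nonneg _) ha1.le)
  · have hL := Lam_nonneg ha
    refine (sq_le_sq₀ (Finset.sum_nonneg fun n _ => norm_nonneg _) (by positivity)).1 ?_
    rw [mul_pow, Real.sq_sqrt hL]
    have h1 : ∀ n ∈ Finset.Ico N m, ‖d n * a ^ (n + 1)‖
        = (√((n : ℝ) + 1) * ‖d n‖) * (‖a‖ ^ (n + 1) / √((n : ℝ) + 1)) := by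
      intro n _
      rw [norm_mul, norm_pow]
      have : √((n : ℝ) + 1) ≠ 0 := by positivity
      field_simp
    rw [Finset.sum_congr rfl h1]
    refine (Finset.sum_mul_sq_le_sq_mul_sq _ _ _).trans ?_
    gcongr
    · refine le_trans (le_of_eq ?_) (hN m hm)
      refine Finset.sum_congr rfl fun n _ => ?_
      rw [mul_pow, Real.sq_sqrt (by positivity)]
    · refine le_trans (le_of_eq ?_) (sum_le_hasSum (Finset.Ico N m)
        (fun n _ => by positivity) (hasSum_Lam ha))
      refine Finset.sum_congr rfl fun n _ => ?_
      rw [div_pow, Real.sq_sqrt (by positivity), ← pow_mul, mul_comm 2]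

theorem norm_le_of_memDStar {f : ℂ → ℂ} (hf : MemDStar f) {a : ℂ} (ha : a ∈ uD) :
    ‖f a‖ ≤ √(eDNormSq f).toReal * √(Lam a) := by
  obtain ⟨d, hd, hs⟩ := exists_coeff hf
  have := tail_bound hd (N := 0) (δ := √(eDNormSq f).toReal) (Real.sqrt_nonneg _) ?_ ha
  · simpa using this
  · intro m _
    rw [Real.sq_sqrt ENNReal.toReal_nonneg]
    exact sum_le_hasSum _ (fun n _ => by positivity) hs

theorem tendsto_norm_sq : Tendsto (fun a : ℂ => 1 - ‖a‖ ^ 2)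
    (Filter.comap (fun a : ℂ => ‖a‖) (𝓝[<] (1 : ℝ))) (𝓝[>] 0) := by
  have h : Tendsto (fun x : ℝ => 1 - x ^ 2) (𝓝[<] 1) (𝓝[>] 0) := by
    refine tendsto_nhdsWithin_iff.2 ⟨?_, ?_⟩
    · have : Continuous fun x : ℝ => 1 - x ^ 2 := by fun_prop
      exact (this.tendsto' 1 0 (by norm_num)).mono_left nhdsWithin_le_nhds
    · filter_upwards [Ioo_mem_nhdsLT (show (0:ℝ) < 1 by norm_num)] with x hx
      simp only [mem_Ioi]
      nlinarith [hx.1, hx.2]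
  exact h.comp tendsto_comap

theorem tendsto_Lam : Tendsto Lam
    (Filter.comap (fun a : ℂ => ‖a‖) (𝓝[<] (1 : ℝ))) atTop := by
  have := Real.tendsto_log_atTop.comp (tendsto_inv_nhdsGT_zero.comp tendsto_norm_sq)
  refine this.congr fun a => ?_
  simp [Lam]

theorem eventually_mem_uD :
    ∀ᶠ a in Filter.comap (fun a : ℂ => ‖a‖) (𝓝[<] (1 : ℝ)), a ∈ uD := by
  have : ∀ᶠ x in 𝓝[<] (1:ℝ), x < 1 := self_mem_nhdsWithin
  filter_upwards [tendsto_comap.eventually this] with a ha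
  simpa [uD] using ha

/-- A fixed element of `𝒟_*` is `o(√Λ)` at the boundary: the pointwise estimate applied to the
tail of its Taylor series. -/
theorem eventually_norm_le {f : ℂ → ℂ} (hf : MemDStar f) {ε : ℝ} (hε : 0 < ε) :
    ∀ᶠ a in Filter.comap (fun a : ℂ => ‖a‖) (𝓝[<] (1 : ℝ)), ‖f a‖ ≤ ε * √(Lam a) := by
  obtain ⟨d, hd, hs⟩ := exists_coeff hf
  set s := (eDNormSq f).toReal
  have h1 : ∀ᶠ N in atTop, s - (ε / 2) ^ 2 <
      ∑ n ∈ Finset.range N, ((n : ℝ) + 1) * ‖d n‖ ^ 2 :=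
    hs.tendsto_sum_nat.eventually_const_lt (by have : 0 < (ε / 2) ^ 2 := by positivity
                                               linarith)
  obtain ⟨N, hN⟩ := h1.exists
  have h2 := Real.tendsto_sqrt_atTop.comp tendsto_Lam
  filter_upwards [eventually_mem_uD,
    h2.eventually_ge_atTop ((∑ n ∈ Finset.range N, ‖d n‖) / (ε / 2))] with a ha hL
  have h3 := tail_bound hd (N := N) (δ := ε / 2) (by positivity) (fun m hm => by
    have h4 : ∑ n ∈ Finset.range m, ((n : ℝ) + 1) * ‖d n‖ ^ 2 ≤ s :=
      sum_le_hasSum _ (fun n _ => by positivity) hs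
    rw [← Finset.sum_range_add_sum_Ico _ hm] at h4
    linarith) ha
  rw [div_le_iff₀ (by positivity)] at hL
  simp only [Function.comp] at hL
  linarith

/-- The reproducing kernel `k_w(z) = log (1 / (1 - w̄ z))` of `𝒟_*`. -/
theorem exists_kernel {w : ℂ} (hw : w ∈ uD) :
    ∃ k, MemDStar k ∧ k w = Lam w ∧ eDNormSq k = ENNReal.ofReal (Lam w) := by
  set c := (starRingEnd ℂ) w with hc
  have hw1 : ‖w‖ < 1 := by simpa [uD] using hw
  have hc1 : ‖c‖ < 1 := by simpa [hc] using hw1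
  have hcz : ∀ z ∈ uD, ‖c * z‖ < 1 := by
    intro z hz
    have hz1 : ‖z‖ < 1 := by simpa [uD] using hz
    rw [norm_mul]
    nlinarith [norm_nonneg c, norm_nonneg z]
  have hslit : ∀ z ∈ uD, 1 - c * z ∈ slitPlane := by
    intro z hz
    have := Complex.mem_slitPlane_of_norm_lt_one (z := -(c * z)) (by simpa using hcz z hz)
    simpa [sub_eq_add_neg] using this
  have hder : ∀ z ∈ uD, HasDerivAt (fun z => -Complex.log (1 - c * z)) (c * (1 - c * z)⁻¹) z := by
    intro z hz
    have h1 : HasDerivAt (fun z => 1 - c * z) (-c) z := by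
      simpa using ((hasDerivAt_id z).const_mul c).const_sub 1
    have h2 := (h1.clog (hslit z hz)).neg
    rwa [neg_div, neg_neg, div_eq_mul_inv] at h2
  have hdiff : DifferentiableOn ℂ (fun z => -Complex.log (1 - c * z)) uD := fun z hz =>
    (hder z hz).differentiableAt.differentiableWithinAt
  have h0 : (fun z => -Complex.log (1 - c * z)) 0 = 0 := by simp
  have hb : ∀ z ∈ uD, HasSum (fun n => c ^ (n + 1) * z ^ n)
      (deriv (fun z => -Complex.log (1 - c * z)) z) := by
    intro z hz
    rw [(hder z hz).deriv]
    refine hasSum_of_eq (fun n => ?_) ((hasSum_geometric_of_norm_lt_one (hcz z hz)).mul_left c)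
    ring
  have hn : eDNormSq (fun z => -Complex.log (1 - c * z)) = ENNReal.ofReal (Lam w) := by
    rw [eDNormSq_eq_tsum h0 hdiff hb, ← (hasSum_Lam hw).tsum_eq,
      ENNReal.ofReal_tsum_of_nonneg (fun n => by positivity) (hasSum_Lam hw).summable]
    congr 1
    funext n
    rw [norm_pow, hc, RCLike.norm_conj, ← pow_mul, mul_comm 2]
  refine ⟨_, ⟨⟨hdiff, ?_⟩, h0⟩, ?_, hn⟩
  · change eDNormSq _ < ⊤
    rw [hn]
    exact ENNReal.ofReal_lt_top
  · have h1 : 1 - c * w = ((1 - ‖w‖ ^ 2 : ℝ) : ℂ) := by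
      rw [hc, Complex.conj_mul']
      push_cast
      rfl
    have h2 : 0 ≤ 1 - ‖w‖ ^ 2 := by nlinarith [norm_nonneg w]
    simp only [h1]
    rw [← Complex.ofReal_log h2, Lam, one_div, Real.log_inv]
    push_cast
    rfl

/-! ### `𝒟_*` as a subspace of `L²(D, dA)` -/

/-- Normalized area measure on the disk. -/
abbrev muD : Measure ℂ := nA.restrict uD

theorem eDNormSq_eq_eLpNorm {f : ℂ → ℂ} (h : f 0 = 0) :
    eDNormSq f = eLpNorm (deriv f) 2 muD ^ 2 := by
  rw [eDNormSq_eq h]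
  have := eLpNorm_nnreal_pow_eq_lintegral (μ := muD) (f := deriv f) (p := 2) two_ne_zero
  norm_num at this
  rw [this]
  refine lintegral_congr fun z => ?_
  rw [← ofReal_norm, ENNReal.ofReal_pow (norm_nonneg _)]

theorem memDStar_iff {f : ℂ → ℂ} :
    MemDStar f ↔ DifferentiableOn ℂ f uD ∧ f 0 = 0 ∧ MemLp (deriv f) 2 muD := by
  constructor
  · rintro ⟨⟨hd, hn⟩, h0⟩
    refine ⟨hd, h0, ?_, ?_⟩
    · exact (hd.deriv isOpen_ball).continuousOn.aestronglyMeasurable measurableSet_ball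
    · have hn : eDNormSq f < ⊤ := hn
      rw [eDNormSq_eq_eLpNorm h0] at hn
      by_contra hcon
      rw [not_lt_top_iff.1 hcon] at hn
      simp at hn
  · rintro ⟨hd, h0, hm⟩
    refine ⟨⟨hd, ?_⟩, h0⟩
    change eDNormSq f < ⊤
    rw [eDNormSq_eq_eLpNorm h0]
    exact ENNReal.pow_lt_top hm.2

theorem deriv_add_ae {f g : ℂ → ℂ} (hf : DifferentiableOn ℂ f uD) (hg : DifferentiableOn ℂ g uD) :
    deriv f + deriv g =ᵐ[muD] deriv (f + g) := by
  refine (ae_restrict_iff' measurableSet_ball).2 (Filter.Eventually.of_forall fun z hz => ?_)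
  have hz' : uD ∈ 𝓝 z := isOpen_ball.mem_nhds hz
  rw [deriv_add (hf.differentiableAt hz') (hg.differentiableAt hz'), Pi.add_apply]

theorem deriv_smul_eq (c : ℂ) (f : ℂ → ℂ) : deriv (c • f) = c • deriv f := by
  funext z
  exact deriv_const_smul_field c f

/-- The space `𝒟_*`, as a space of functions on `ℂ` (values off the disk are not identified). -/
def dirSpace : Submodule ℂ (ℂ → ℂ) where
  carrier := {f | MemDStar f}
  add_mem' := by
    intro f g hf hg
    have hf := memDStar_iff.1 hf
    have hg := memDStar_iff.1 hg
    refine memDStar_iff.2 ⟨hf.1.add hg.1, by simp [hf.2.1, hg.2.1], ?_⟩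
    exact (memLp_congr_ae (deriv_add_ae hf.1 hg.1)).1 (hf.2.2.add hg.2.2)
  zero_mem' := by
    refine memDStar_iff.2 ⟨differentiableOn_const 0, rfl, ?_⟩
    have : deriv (0 : ℂ → ℂ) = 0 := by
      funext z
      simp
    rw [this]
    exact MemLp.zero
  smul_mem' := by
    intro c f hf
    have hf := memDStar_iff.1 hf
    refine memDStar_iff.2 ⟨hf.1.const_smul c, by simp [hf.2.1], ?_⟩
    rw [deriv_smul_eq]
    exact hf.2.2.const_smul c

/-- The derivative map, which embeds `𝒟_*` isometrically into `L²(D, dA)`. -/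
def derivLp : dirSpace →ₗ[ℂ] Lp ℂ 2 muD where
  toFun f := (memDStar_iff.1 f.2).2.2.toLp (deriv (f : ℂ → ℂ))
  map_add' f g := by
    rw [← MemLp.toLp_add]
    exact MemLp.toLp_congr _ _ (deriv_add_ae (memDStar_iff.1 f.2).1 (memDStar_iff.1 g.2).1).symm
  map_smul' c f := by
    rw [RingHom.id_apply, ← MemLp.toLp_const_smul]
    exact MemLp.toLp_congr _ _ (by
      rw [Submodule.coe_smul, deriv_smul_eq])

theorem eDNormSq_eq_norm (f : dirSpace) :
    eDNormSq f = ENNReal.ofReal (‖derivLp f‖ ^ 2) := by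
  have hf := memDStar_iff.1 f.2
  have h1 : ‖derivLp f‖ = (eLpNorm (deriv (f : ℂ → ℂ)) 2 muD).toReal := Lp.norm_toLp _ hf.2.2
  rw [eDNormSq_eq_eLpNorm hf.2.1, h1, ENNReal.ofReal_pow ENNReal.toReal_nonneg,
    ENNReal.ofReal_toReal hf.2.2.2.ne]

theorem norm_le_norm_derivLp (f : dirSpace) {a : ℂ} (ha : a ∈ uD) :
    ‖(f : ℂ → ℂ) a‖ ≤ ‖derivLp f‖ * √(Lam a) := by
  have := norm_le_of_memDStar f.2 ha
  rwa [eDNormSq_eq_norm, ENNReal.toReal_ofReal (by positivity),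
    Real.sqrt_sq (norm_nonneg _)] at this

/-! ### Compactness and the uniform boundary estimate -/

/-- The unit ball of the seminorm `‖J ·‖` is, up to an arbitrarily small error, contained in a
finite set plus the finite-codimensional subspace `ker S`, which need not be closed. The net comes
from the projection onto the orthogonal complement of `J (ker S)`: it maps onto a
finite-dimensional space, where bounded sets are totally bounded. -/
theorem exists_finite_net {V E W : Type*} [AddCommGroup V] [Module ℂ V] [NormedAddCommGroup E]
    [InnerProductSpace ℂ E] [CompleteSpace E] [AddCommGroup W] [Module ℂ W]
    (J : V →ₗ[ℂ] E) (S : V →ₗ[ℂ] W) [FiniteDimensional ℂ (LinearMap.range S)] {η : ℝ}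
    (hη : 0 < η) :
    ∃ t : Set V, t.Finite ∧ (∀ h ∈ t, ‖J h‖ ≤ 1) ∧
      ∀ f, ‖J f‖ ≤ 1 → ∃ h ∈ t, ∃ k, S k = 0 ∧ ‖J (f - h - k)‖ < η := by
  set E0 : Submodule ℂ E := ((LinearMap.ker S).map J).topologicalClosure with hE0
  have : CompleteSpace E0 :=
    (Submodule.isClosed_topologicalClosure ((LinearMap.ker S).map J)).completeSpace_coe
  set Q : V →ₗ[ℂ] E := (E0ᗮ.starProjection : E →ₗ[ℂ] E) ∘ₗ J with hQ
  have hker : LinearMap.ker S ≤ LinearMap.ker Q := by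
    intro v hv
    have : J v ∈ E0 := Submodule.le_topologicalClosure _ (Submodule.mem_map_of_mem hv)
    simp only [LinearMap.mem_ker, hQ, LinearMap.comp_apply, ContinuousLinearMap.coe_coe]
    rw [Submodule.starProjection_apply_eq_zero_iff]
    simpa using Submodule.le_orthogonal_orthogonal E0 this
  have hfin1 : FiniteDimensional ℂ (V ⧸ LinearMap.ker S) :=
    S.quotKerEquivRange.symm.finiteDimensional
  have hfin : FiniteDimensional ℂ (LinearMap.range Q) := by
    have : LinearMap.range Q = LinearMap.range ((LinearMap.ker S).liftQ Q hker) :=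
      (Submodule.range_liftQ _ _ _).symm
    rw [this]
    infer_instance
  have hQle : ∀ f, ‖Q f‖ ≤ ‖J f‖ := fun f => Submodule.norm_starProjection_apply_le _ _
  have hproper : ProperSpace (LinearMap.range Q) := FiniteDimensional.proper ℂ _
  have htb : TotallyBounded (Q '' {f | ‖J f‖ ≤ 1}) := by
    have h1 : TotallyBounded (closedBall (0 : LinearMap.range Q) 1) :=
      (isCompact_closedBall _ _).totallyBounded
    refine (h1.image (uniformContinuous_subtype_val)).subset ?_
    rintro _ ⟨f, hf, rfl⟩
    refine ⟨⟨Q f, f, rfl⟩, ?_, rfl⟩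
    rw [mem_closedBall_zero_iff]
    exact (hQle f).trans hf
  obtain ⟨t, hts, htf, hcov⟩ := Metric.finite_approx_of_totallyBounded htb (η / 2) (by positivity)
  have hts' : ∀ y ∈ t, ∃ f, ‖J f‖ ≤ 1 ∧ Q f = y := fun y hy => hts hy
  choose! g hg using hts'
  refine ⟨g '' t, htf.image g, ?_, fun f hf => ?_⟩
  · rintro _ ⟨y, hy, rfl⟩
    exact (hg y hy).1
  · obtain ⟨y, hy, hfy⟩ := mem_iUnion₂.1 (hcov ⟨f, hf, rfl⟩)
    refine ⟨g y, ⟨y, hy, rfl⟩, ?_⟩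
    set x := J (f - g y) with hx
    have hQx : ‖E0ᗮ.starProjection x‖ < η / 2 := by
      have : E0ᗮ.starProjection x = Q f - y := by
        rw [← (hg y hy).2, ← map_sub]
        rfl
      rwa [this, ← dist_eq_norm]
    have hPx : E0.starProjection x ∈ closure (((LinearMap.ker S).map J : Submodule ℂ E) : Set E) :=
      Submodule.starProjection_apply_mem E0 x
    obtain ⟨_, ⟨k, hk, rfl⟩, hkd⟩ := Metric.mem_closure_iff.1 hPx (η / 2) (by positivity)
    refine ⟨k, hk, ?_⟩
    have hsplit := E0.starProjection_add_starProjection_orthogonal x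
    have : J (f - g y - k) = (E0.starProjection x - J k) + E0ᗮ.starProjection x := by
      rw [map_sub, ← hx]
      nth_rewrite 1 [← hsplit]
      abel
    rw [this]
    rw [dist_eq_norm] at hkd
    linarith [norm_add_le (E0.starProjection x - J k) (E0ᗮ.starProjection x)]

theorem eDNormSq_le_of_eOpNorm_lt {T : (ℂ → ℂ) → ℂ → ℂ} {c : ℝ} (hc : 0 ≤ c)
    (h : eOpNorm MemDStar eDNormSq T < ENNReal.ofReal c) (f : ℂ → ℂ) (hf : MemDStar f) :
    eDNormSq (T f) ≤ ENNReal.ofReal (c ^ 2) * eDNormSq f := by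
  obtain ⟨C, hC, hCc⟩ := sInf_lt_iff.1 h
  refine (hC f hf).trans ?_
  rw [ENNReal.ofReal_pow hc]
  gcongr

theorem norm_derivLp_le {f g : dirSpace} {c : ℝ} (hc : 0 ≤ c)
    (h : eDNormSq (g : ℂ → ℂ) ≤ ENNReal.ofReal (c ^ 2) * eDNormSq (f : ℂ → ℂ)) :
    ‖derivLp g‖ ≤ c * ‖derivLp f‖ := by
  rw [eDNormSq_eq_norm, eDNormSq_eq_norm, ← ENNReal.ofReal_mul (by positivity), ← mul_pow,
    ENNReal.ofReal_le_ofReal_iff (by positivity)] at h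
  exact (sq_le_sq₀ (by positivity) (by positivity)).1 h

/-- The composition operator as a linear endomorphism of `𝒟_*`. -/
def compLin (φ : ℂ → ℂ) (h : ∀ f, MemDStar f → MemDStar (compOp φ f)) :
    dirSpace →ₗ[ℂ] dirSpace where
  toFun f := ⟨compOp φ f, h f f.2⟩
  map_add' _ _ := rfl
  map_smul' _ _ := rfl

/-- Uniformly over the unit ball of `𝒟_*`, `|f(φ(a))| = o(√Λ(a))` as `|a| → 1`. Up to norm `5 ε`,
`C_φ` maps the unit ball into a finite set, and each element of that set is `o(√Λ)`. -/
theorem eventually_uniform {φ : ℂ → ℂ}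
    (hc : IsCompactOpOn MemDStar eDNormSq (compOp φ)) {ε : ℝ} (hε : 0 < ε) :
    ∀ᶠ a in Filter.comap (fun a : ℂ => ‖a‖) (𝓝[<] (1 : ℝ)),
      ∀ f : dirSpace, ‖derivLp f‖ ≤ 1 → ‖(f : ℂ → ℂ) (φ a)‖ ≤ 6 * ε * √(Lam a) := by
  obtain ⟨⟨hmem, hbd⟩, hlim⟩ := hc
  set T := compLin φ hmem with hT
  -- A bound `M` for the norm of the composition operator
  obtain ⟨M, hM0, hM⟩ : ∃ M : ℝ, 0 < M ∧ ∀ f : dirSpace, ‖derivLp (T f)‖ ≤ M * ‖derivLp f‖ := by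
    refine ⟨(eOpNorm MemDStar eDNormSq (compOp φ)).toReal + 1, by positivity, fun f => ?_⟩
    refine norm_derivLp_le (by positivity) (eDNormSq_le_of_eOpNorm_lt (by positivity) ?_ f f.2)
    rw [ENNReal.lt_ofReal_iff_toReal_lt hbd]
    linarith
  -- The subspace `ker R` has finite codimension and `C_φ` has norm at most `ε` on it. Nothing is
  -- used about `R` off its kernel, where `R f` need not be holomorphic and `deriv` may be junk.
  obtain ⟨n, hn⟩ := (hlim.eventually_lt_const (ENNReal.ofReal_pos.2 hε)).exists
  obtain ⟨_, ⟨R, hR, rfl⟩, hRε⟩ := sInf_lt_iff.1 hn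
  have hRfin : FiniteDimensional ℂ (LinearMap.range R) :=
    Module.rank_lt_aleph0_iff.1 (hR.trans Cardinal.natCast_lt_aleph0)
  set S : dirSpace →ₗ[ℂ] (ℂ → ℂ) := R.domRestrict dirSpace with hS
  have hSfin : FiniteDimensional ℂ (LinearMap.range S) := by
    refine Submodule.finiteDimensional_of_le (S₂ := LinearMap.range R) ?_
    rintro _ ⟨f, rfl⟩
    exact ⟨f, rfl⟩
  have hker : ∀ k : dirSpace, S k = 0 → ‖derivLp (T k)‖ ≤ ε * ‖derivLp k‖ := by
    intro k hk
    refine norm_derivLp_le hε.le ?_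
    have h1 := eDNormSq_le_of_eOpNorm_lt hε.le hRε k k.2
    have hk' : R k = 0 := hk
    simp only [hk', Pi.zero_apply, sub_zero] at h1
    exact h1
  set η : ℝ := min 1 (ε / M) with hη
  have hη0 : 0 < η := lt_min one_pos (div_pos hε hM0)
  obtain ⟨t, htf, ht1, htc⟩ := exists_finite_net derivLp S hη0
  have hev : ∀ᶠ a in Filter.comap (fun a : ℂ => ‖a‖) (𝓝[<] (1 : ℝ)),
      ∀ h ∈ t, ‖(T h : ℂ → ℂ) a‖ ≤ ε * √(Lam a) :=
    (Filter.eventually_all_finite htf).2 fun h _ => eventually_norm_le (T h).2 hε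
  filter_upwards [hev, eventually_mem_uD] with a ha hau f hf
  obtain ⟨h, hh, k, hk, hd⟩ := htc f hf
  have hη1 : η ≤ 1 := min_le_left _ _
  have hη2 : M * η ≤ ε := by
    have : η ≤ ε / M := min_le_right _ _
    rwa [le_div_iff₀ hM0, mul_comm] at this
  have hkn : ‖derivLp k‖ ≤ 3 := by
    have h1 : derivLp k = derivLp f - derivLp h - derivLp (f - h - k) := by
      rw [map_sub, map_sub]
      abel
    have h2 := norm_sub_le (derivLp f - derivLp h) (derivLp (f - h - k))
    have h3 := norm_sub_le (derivLp f) (derivLp h)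
    rw [h1]
    linarith [ht1 h hh]
  have hfh : ‖derivLp (T (f - h))‖ ≤ 5 * ε := by
    have h1 : derivLp (T (f - h)) = derivLp (T k) + derivLp (T (f - h - k)) := by
      rw [← map_add, ← map_add]
      congr 2
      abel
    have h2 := norm_add_le (derivLp (T k)) (derivLp (T (f - h - k)))
    have h3 := hker k hk
    have h4 := hM (f - h - k)
    have h5 : ε * ‖derivLp k‖ ≤ ε * 3 := by gcongr
    have h6 : M * ‖derivLp (f - h - k)‖ ≤ M * η := by gcongr
    rw [h1]
    linarith
  have h1 := norm_le_norm_derivLp (T (f - h)) hau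
  have h2 : (f : ℂ → ℂ) (φ a) = (T h : ℂ → ℂ) a + (T (f - h) : ℂ → ℂ) a := by
    change _ = (h : ℂ → ℂ) (φ a) + ((f : ℂ → ℂ) (φ a) - (h : ℂ → ℂ) (φ a))
    ring
  have h3 : ‖derivLp (T (f - h))‖ * √(Lam a) ≤ 5 * ε * √(Lam a) := by gcongr
  rw [h2]
  linarith [norm_add_le ((T h : ℂ → ℂ) a) ((T (f - h) : ℂ → ℂ) a), ha h hh]

/- STATEMENT 5 -/
theorem stmt5 (φ : ℂ → ℂ) (hφ : IsSchur φ) (h0 : φ 0 = 0)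
    (hc : IsCompactOpOn MemDStar eDNormSq (compOp φ)) :
    Filter.Tendsto
      (fun a : ℂ => Real.log (1 / (1 - ‖φ a‖ ^ 2)) / Real.log (1 / (1 - ‖a‖ ^ 2)))
      (Filter.comap (fun a : ℂ => ‖a‖) (𝓝[<] (1 : ℝ))) (𝓝 0) := by
  change Tendsto (fun a => Lam (φ a) / Lam a) _ _
  rw [Metric.tendsto_nhds]
  intro ε hε
  set δ : ℝ := √ε / 12 with hδ
  have hδ0 : 0 < δ := by positivity
  filter_upwards [eventually_uniform hc hδ0, eventually_mem_uD,
    tendsto_Lam.eventually_gt_atTop 0] with a ha hau hLa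
  have hw : φ a ∈ uD := hφ.2 hau
  have hLw := Lam_nonneg hw
  rw [Real.dist_0_eq_abs, abs_of_nonneg (by positivity), div_lt_iff₀ hLa]
  rcases hLw.eq_or_lt with h | hpos
  · rw [← h]
    positivity
  -- Test the uniform estimate on the normalized reproducing kernel at `φ a`
  obtain ⟨k, hk, hkw, hkn⟩ := exists_kernel hw
  set q : dirSpace := ⟨k, hk⟩ with hq
  have hqn : ‖derivLp q‖ = √(Lam (φ a)) := by
    have h1 := eDNormSq_eq_norm q
    rw [show ((q : ℂ → ℂ)) = k from rfl, hkn, ENNReal.ofReal_eq_ofReal_iff hLw (by positivity)] at h1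
    rw [h1, Real.sqrt_sq (norm_nonneg _)]
  have hs : 0 < √(Lam (φ a)) := Real.sqrt_pos.2 hpos
  have h1 := ha ((((√(Lam (φ a)))⁻¹ : ℝ) : ℂ) • q) (by
    rw [map_smul, norm_smul, hqn, Complex.norm_real, Real.norm_of_nonneg (by positivity),
      inv_mul_cancel₀ hs.ne'])
  have h2 : ‖((((((√(Lam (φ a)))⁻¹ : ℝ) : ℂ) • q : dirSpace)) : ℂ → ℂ) (φ a)‖
      = √(Lam (φ a)) := by
    change ‖(((√(Lam (φ a)))⁻¹ : ℝ) : ℂ) * k (φ a)‖ = _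
    rw [hkw, norm_mul, Complex.norm_real, Complex.norm_real, Real.norm_of_nonneg (by positivity),
      Real.norm_of_nonneg hLw, inv_mul_eq_div, Real.div_sqrt]
  rw [h2] at h1
  calc Lam (φ a) = √(Lam (φ a)) ^ 2 := (Real.sq_sqrt hLw).symm
    _ ≤ (6 * δ * √(Lam a)) ^ 2 := by gcongr
    _ = ε / 4 * Lam a := by
      rw [mul_pow, Real.sq_sqrt hLa.le, hδ, mul_pow, div_pow, Real.sq_sqrt hε.le]
      ring
    _ < ε * Lam a := by nlinarith [mul_pos hε hLa]

end
end

section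
/- There exists a constant κ₁ > 0 with the following property: for every α ∈ ℝ and every analytic function f on D such that the radial limit f*(e^{it}) = lim_{r→1⁻} f(r e^{it}) exists for a.e. t, and such that Im f(0) < α and f(D) ⊆ {z ∈ ℂ : 0 < Re z < π} ∪ {z ∈ ℂ : Im z < α}, one has, for all y ≥ α: m({e^{it} ∈ T : Im f*(e^{it}) ≥ y}) ≤ κ₁ e^{α−y}. -/
/-!
After subtracting `iα`, take `α = 0`. The estimate is a bound for the harmonic measure of the part
of the boundary at height at least `y` in the domain `Ω = {0 < Re w < π} ∪ {Im w < 0}`, seen from a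
point of the lower half-plane. It is obtained from an explicit positive superharmonic function on `Ω`
(`barrier R`, with `R` comparable to `e^y`) that is at most `500` on the lower half-plane and at
least `R` at height at least `log R`. In the half-strip this function is `505 + R * θ`, where `θ` is
the argument of a conformal map of the strip onto a half-plane and satisfies `θ = O(1/R)` at bounded
height; in the lower half-plane it is a multiple of a Poisson-type kernel with pole at `π/2 + 4i`,
whose growth in the vertical direction allows the two pieces to be glued by taking a minimum
(`barrier_locMin`).

Since `barrier R ∘ f` is superharmonic, its mean over each circle `|z| = r < 1` is at most its
value at `0` (`circleAverage_le`), so Markov's inequality bounds the measure of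
`{t | Im f(r e^{it}) ≥ log R}` by `2π * 500 / R` (`circle_estimate`). Letting `r → 1` along a sequence,
with a loss of `1` in height, gives the claim for the radial limits (`volume_liminf_le`).

The super-mean-value inequality is proved from a minimum principle for functions that are locally
minima of two harmonic functions, comparing with real parts of entire functions that approximate
the boundary values (Stone–Weierstrass in the form of density of trigonometric polynomials).
-/

open Complex MeasureTheory Metric Set Filter Topology
open scoped ENNReal NNReal

noncomputable section

/-! ### Superharmonic functions on a disk -/

/-- A trigonometric polynomial on the circle of radius `r` is a sum of a holomorphic and an
antiholomorphic polynomial, hence extends harmonically to the disk. -/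
lemma span_fourier_harmonic {r : ℝ} (hr : 0 < r) (q : C(AddCircle (2 * Real.pi), ℂ))
    (hq : q ∈ Submodule.span ℂ (range <| @fourier (2 * Real.pi))) :
    ∃ p₁ p₂ : ℂ → ℂ, Differentiable ℂ p₁ ∧ Differentiable ℂ p₂ ∧
      ∀ x, q x = p₁ (r * AddCircle.toCircle x) +
        (starRingEnd ℂ) (p₂ (r * AddCircle.toCircle x)) := by
  have hr' : (r : ℂ) ≠ 0 := by exact_mod_cast hr.ne'
  induction hq using Submodule.span_induction with
  | mem q h =>
    obtain ⟨n, rfl⟩ := h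
    rcases Int.eq_nat_or_neg n with ⟨k, rfl | rfl⟩
    · refine ⟨fun z => (z / r) ^ k, fun _ => 0, by fun_prop, by fun_prop, fun x => ?_⟩
      simp [AddCircle.toCircle_nsmul, hr']
    · refine ⟨fun _ => 0, fun z => (z / r) ^ k, by fun_prop, by fun_prop, fun x => ?_⟩
      simp [AddCircle.toCircle_nsmul, AddCircle.toCircle_neg, hr']
      rw [← inv_pow, ← Circle.coe_inv, Circle.coe_inv_eq_conj]
  | zero => exact ⟨fun _ => 0, fun _ => 0, by fun_prop, by fun_prop, fun x => by simp⟩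
  | add q₁ q₂ _ _ h₁ h₂ =>
    obtain ⟨a, b, ha, hb, h⟩ := h₁
    obtain ⟨a', b', ha', hb', h'⟩ := h₂
    refine ⟨fun z => a z + a' z, fun z => b z + b' z, by fun_prop, by fun_prop, fun x => ?_⟩
    simp [h, h']; ring
  | smul c q _ h =>
    obtain ⟨a, b, ha, hb, h⟩ := h
    refine ⟨fun z => c * a z, fun z => (starRingEnd ℂ) c * b z, by fun_prop, by fun_prop,
      fun x => ?_⟩
    simp [h]; ring

/-- Continuous real boundary data on a circle is uniformly approximated by real parts of entire
functions; this replaces the solution of the Dirichlet problem on the disk. -/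
lemma exists_entire_approx {r : ℝ} (hr : 0 < r) {u : ℂ → ℝ}
    (hu : ContinuousOn u (sphere 0 r)) {ε : ℝ} (hε : 0 < ε) :
    ∃ p : ℂ → ℂ, Differentiable ℂ p ∧ ∀ z ∈ sphere (0 : ℂ) r, |u z - (p z).re| < ε := by
  have : Fact (0 < 2 * Real.pi) := ⟨by positivity⟩
  have hc : Continuous fun x : AddCircle (2 * Real.pi) =>
      (r : ℂ) * (AddCircle.toCircle x : ℂ) :=
    continuous_const.mul (continuous_subtype_val.comp AddCircle.continuous_toCircle)
  let G : C(AddCircle (2 * Real.pi), ℂ) :=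
    ⟨fun x => (u (r * AddCircle.toCircle x) : ℂ), continuous_ofReal.comp
      (hu.comp_continuous hc (fun x => by
        rw [mem_sphere_zero_iff_norm, norm_mul, Circle.norm_coe, norm_real, mul_one,
          Real.norm_of_nonneg hr.le]))⟩
  have hG : G ∈ (Submodule.span ℂ (range <| @fourier (2 * Real.pi))).topologicalClosure := by
    rw [span_fourier_closure_eq_top]; trivial
  obtain ⟨q, hq, hd⟩ := Metric.mem_closure_iff.1 hG ε hε
  obtain ⟨p₁, p₂, h₁, h₂, h⟩ := span_fourier_harmonic hr q hq
  refine ⟨fun z => p₁ z + p₂ z, by fun_prop, fun z hz => ?_⟩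
  obtain ⟨x, rfl⟩ : ∃ x : AddCircle (2 * Real.pi), (r : ℂ) * AddCircle.toCircle x = z := by
    refine ⟨((arg z : ℝ) : AddCircle (2 * Real.pi)), ?_⟩
    have h := norm_mul_exp_arg_mul_I z
    rw [mem_sphere_zero_iff_norm.1 hz] at h
    rw [AddCircle.toCircle_apply_mk, Circle.coe_exp, div_self (by positivity), one_mul, h]
  have h3 := (ContinuousMap.dist_apply_le_dist x).trans_lt hd
  rw [dist_eq] at h3
  have h4 := (abs_re_le_norm _).trans_lt h3
  simpa [G, h] using h4

/-- `u` is, near `z`, the minimum of the real parts of two holomorphic functions. This is the form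
in which superharmonicity is used: the minimum principle follows directly, without local mean
values. -/
def LocMin (u : ℂ → ℝ) (z : ℂ) : Prop :=
  ∃ F₁ F₂ : ℂ → ℂ, (∀ᶠ w in 𝓝 z, DifferentiableAt ℂ F₁ w) ∧
    (∀ᶠ w in 𝓝 z, DifferentiableAt ℂ F₂ w) ∧
    u =ᶠ[𝓝 z] fun w => min (F₁ w).re (F₂ w).re

lemma LocMin.comp {u : ℂ → ℝ} {f : ℂ → ℂ} {z : ℂ} (h : LocMin u (f z))
    (hf : ∀ᶠ w in 𝓝 z, DifferentiableAt ℂ f w) : LocMin (fun w => u (f w)) z := by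
  obtain ⟨F₁, F₂, h₁, h₂, h⟩ := h
  have ht : Tendsto f (𝓝 z) (𝓝 (f z)) := hf.self_of_nhds.continuousAt
  refine ⟨F₁ ∘ f, F₂ ∘ f, ?_, ?_, ht.eventually h⟩
  · filter_upwards [hf, ht.eventually h₁] with w hw h using h.comp w hw
  · filter_upwards [hf, ht.eventually h₂] with w hw h using h.comp w hw

lemma LocMin.of_eventuallyEq {u : ℂ → ℝ} {F : ℂ → ℂ} {z : ℂ}
    (hF : ∀ᶠ w in 𝓝 z, DifferentiableAt ℂ F w) (h : u =ᶠ[𝓝 z] fun w => (F w).re) :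
    LocMin u z := ⟨F, F, hF, hF, by simpa using h⟩

lemma LocMin.continuousAt {u : ℂ → ℝ} {z : ℂ} (h : LocMin u z) : ContinuousAt u z := by
  obtain ⟨F₁, F₂, h₁, h₂, h⟩ := h
  refine ContinuousAt.congr ?_ h.symm
  exact (continuous_re.continuousAt.comp h₁.self_of_nhds.continuousAt).min
    (continuous_re.continuousAt.comp h₂.self_of_nhds.continuousAt)

/-- `u` is touched from above at `z` by a harmonic function. -/
lemma LocMin.touching {u : ℂ → ℝ} {z : ℂ} (h : LocMin u z) :
    ∃ F : ℂ → ℂ, (∀ᶠ w in 𝓝 z, DifferentiableAt ℂ F w) ∧ u z = (F z).re ∧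
      ∀ᶠ w in 𝓝 z, u w ≤ (F w).re := by
  obtain ⟨F₁, F₂, h₁, h₂, h⟩ := h
  rcases min_choice (F₁ z).re (F₂ z).re with hm | hm
  · exact ⟨F₁, h₁, h.self_of_nhds.trans hm, h.mono fun w hw => hw.trans_le (min_le_left _ _)⟩
  · exact ⟨F₂, h₂, h.self_of_nhds.trans hm, h.mono fun w hw => hw.trans_le (min_le_right _ _)⟩

/-- If `F` is holomorphic and `Re F` touches `u` from above at the local minimum `z` of `u - Re p`,
then `exp (p - F)` has a local maximum of its modulus at `z`, hence locally constant modulus. -/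
lemma LocMin.eventually_eq_of_isLocalMin {u : ℂ → ℝ} {p : ℂ → ℂ} {z : ℂ} (h : LocMin u z)
    (hp : Differentiable ℂ p) (hm : IsLocalMin (fun w => u w - (p w).re) z) :
    ∀ᶠ w in 𝓝 z, u w - (p w).re = u z - (p z).re := by
  obtain ⟨F, hF, hz, hle⟩ := h.touching
  have hd : ∀ᶠ w in 𝓝 z, DifferentiableAt ℂ (fun w => exp (p w - F w)) w :=
    hF.mono fun w hw => ((hp w).sub hw).cexp
  have hmax : IsLocalMax (norm ∘ fun w => exp (p w - F w)) z := by
    filter_upwards [hm, hle] with w h1 h2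
    simp only [Function.comp, norm_exp, sub_re]
    apply Real.exp_le_exp.2
    linarith
  have hc := norm_eventually_eq_of_isLocalMax hd hmax
  filter_upwards [hm, hle, hc] with w h1 h2 h3
  simp only [norm_exp, sub_re, Real.exp_eq_exp] at h3
  linarith

lemma min_principle {u : ℂ → ℝ} {p : ℂ → ℂ} {r ε : ℝ} (hr : 0 < r)
    (hu : ∀ z ∈ closedBall (0 : ℂ) r, LocMin u z) (hp : Differentiable ℂ p)
    (hb : ∀ z ∈ sphere (0 : ℂ) r, -ε ≤ u z - (p z).re) : -ε ≤ u 0 - (p 0).re := by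
  by_contra! hcon
  set φ : ℂ → ℝ := fun w => u w - (p w).re with hφ
  have hcont : ContinuousOn φ (closedBall 0 r) := fun z hz =>
    ((hu z hz).continuousAt.sub
      (continuous_re.continuousAt.comp hp.continuous.continuousAt)).continuousWithinAt
  have hK := isCompact_closedBall (0 : ℂ) r
  obtain ⟨z₀, hz₀, hmin⟩ := hK.exists_isMinOn ⟨0, by simp [hr.le]⟩ hcont
  have hM : IsCompact (closedBall (0 : ℂ) r ∩ φ ⁻¹' {φ z₀}) :=
    hK.of_isClosed_subset (hcont.preimage_isClosed_of_isClosed isClosed_closedBall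
      isClosed_singleton) inter_subset_left
  -- A minimizer that is rightmost among all minimizers: near an interior one, points further to
  -- the right would be minimizers as well.
  obtain ⟨z₁, ⟨hz₁, hz₁'⟩, hmax⟩ := hM.exists_isMaxOn ⟨z₀, hz₀, rfl⟩ continuous_re.continuousOn
  have hz₁' : φ z₁ = φ z₀ := hz₁'
  have h0 : φ z₀ ≤ φ 0 := hmin (by simp [hr.le])
  have hball : z₁ ∈ ball (0 : ℂ) r := by
    rcases (mem_closedBall.1 hz₁).lt_or_eq with h | h
    · exact h
    · have := hb z₁ h
      have h2 : -ε ≤ φ z₁ := this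
      have h3 : φ 0 < -ε := hcon
      linarith
  have hnhds : ∀ᶠ w in 𝓝 z₁, w ∈ ball (0 : ℂ) r := isOpen_ball.mem_nhds hball
  have hloc : IsLocalMin φ z₁ := by
    filter_upwards [hnhds] with w hw
    rw [hz₁']
    exact hmin (ball_subset_closedBall hw)
  have hev := (hu z₁ hz₁).eventually_eq_of_isLocalMin hp hloc
  have ht : Tendsto (fun s : ℝ => z₁ + s) (𝓝[>] 0) (𝓝 z₁) := by
    have : Continuous (fun s : ℝ => z₁ + (s : ℂ)) := by fun_prop
    have := (this.tendsto 0).mono_left (nhdsWithin_le_nhds (s := Ioi 0))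
    simpa using this
  obtain ⟨s, ⟨h1, h2⟩, h3⟩ :=
    ((ht.eventually (hev.and hnhds)).and self_mem_nhdsWithin).exists
  have h5 := hmax (show z₁ + s ∈ _ from ⟨ball_subset_closedBall h2, h1.trans hz₁'⟩)
  simp only [add_re, ofReal_re, mem_ofPred_eq] at h5
  have h3 : 0 < s := h3
  linarith

/-- The super-mean-value inequality on large circles. -/
lemma circleAverage_le {u : ℂ → ℝ} {r : ℝ} (hr : 0 < r)
    (hu : ∀ z ∈ closedBall (0 : ℂ) r, LocMin u z) : Real.circleAverage u 0 r ≤ u 0 := by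
  have hcont : ContinuousOn u (sphere 0 r) := fun z hz =>
    (hu z (sphere_subset_closedBall hz)).continuousAt.continuousWithinAt
  have hint : CircleIntegrable u 0 r := hcont.circleIntegrable hr.le
  refine le_of_forall_pos_le_add fun ε hε => ?_
  obtain ⟨p, hp, hap⟩ := exists_entire_approx hr hcont (half_pos hε)
  have h1 : -(ε / 2) ≤ u 0 - (p 0).re :=
    min_principle hr hu hp fun z hz => (abs_lt.1 (hap z hz)).1.le
  have hpi : CircleIntegrable p 0 r := hp.continuous.continuousOn.circleIntegrable hr.le
  have hpr : CircleIntegrable (fun z => (p z).re + ε / 2) 0 r :=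
    ContinuousOn.circleIntegrable hr.le
      ((continuous_re.comp hp.continuous).add continuous_const).continuousOn
  have h2 : Real.circleAverage (fun z => (p z + (ε / 2 : ℝ)).re) 0 r = (p 0).re + ε / 2 := by
    have hd : Differentiable ℂ fun z => p z + (ε / 2 : ℝ) := by fun_prop
    have h := reCLM.circleAverage_comp_comm (f := fun z => p z + (ε / 2 : ℝ)) (c := 0) (R := r)
      (hd.continuous.continuousOn.circleIntegrable hr.le)
    rw [hd.diffContOnCl.circleAverage] at h
    simpa [Function.comp_def] using h
  have h3 : Real.circleAverage u 0 r ≤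
      Real.circleAverage (fun z => (p z + (ε / 2 : ℝ)).re) 0 r := by
    refine Real.circleAverage_mono hint (by simpa using hpr) fun z hz => ?_
    rw [abs_of_pos hr] at hz
    have := (abs_lt.1 (hap z hz)).2
    simp only [add_re, ofReal_re]
    linarith
  linarith

/-! ### The barrier -/

/-- Holomorphic function whose real part is `2000` times the Poisson-type kernel
`(4 - Im w) / |w - π/2 - 4i|²`: positive and harmonic below height `4`, at most `500` on `Im w ≤ 0`,
and increasing in `Im w` over the segment `0 < Re w < π` between the heights `0` and `1`. -/
def lowerF (w : ℂ) : ℂ := -2000 * I / (w - (Real.pi / 2 + 4 * I))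

/-- Conformal map of the strip `0 < Re w < π` onto the upper half-plane, sending the part
`exp (Im w) ≥ R` of the strip to the closed left half of that half-plane. -/
def upperQ (R : ℝ) (w : ℂ) : ℂ := (R - exp (-I * w)) / (R + exp (-I * w))

/-- Holomorphic function on the strip `0 < Re w < π` with real part `505 + R * arg (upperQ R w)`.
Up to the factor `π`, the argument is the harmonic measure of the part of the boundary of the strip
at height at least `log R`; it is at least `π/2` for `Im w ≥ log R` and `O(1/R)` for `Im w ≤ 1`. -/
def upperF (R : ℝ) (w : ℂ) : ℂ := 505 - R * I * log (upperQ R w)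

lemma lowerF_re (w : ℂ) : (lowerF w).re =
    2000 * (4 - w.im) / ((w.re - Real.pi / 2) ^ 2 + (4 - w.im) ^ 2) := by
  have h : normSq (w - (Real.pi / 2 + 4 * I)) =
      (w.re - Real.pi / 2) ^ 2 + (4 - w.im) ^ 2 := by
    have h1 : (w - (Real.pi / 2 + 4 * I)).re = w.re - Real.pi / 2 := by simp
    have h2 : (w - (Real.pi / 2 + 4 * I)).im = w.im - 4 := by simp
    rw [normSq_apply, h1, h2]; ring
  rw [lowerF, div_re, h]
  simp
  ring

lemma lowerF_re_le {w : ℂ} (hw : w.im ≤ 0) : (lowerF w).re ≤ 500 := by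
  rw [lowerF_re, div_le_iff₀ (by nlinarith [sq_nonneg (w.re - Real.pi / 2)])]
  nlinarith [sq_nonneg (w.re - Real.pi / 2)]

lemma lowerF_re_nonneg {w : ℂ} (hw : w.im ≤ 1) : 0 ≤ (lowerF w).re := by
  rw [lowerF_re]
  have : 0 ≤ 4 - w.im := by linarith
  positivity

lemma lowerF_re_ge {w : ℂ} (hw : w.im = 1) (h0 : 0 < w.re) (hpi : w.re < Real.pi) :
    522 ≤ (lowerF w).re := by
  rw [lowerF_re, hw, le_div_iff₀ (by nlinarith [sq_nonneg (w.re - Real.pi / 2)])]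
  have := Real.pi_lt_d2
  nlinarith [mul_pos h0 (sub_pos.2 hpi), Real.pi_pos]

lemma lowerF_differentiableAt {w : ℂ} (hw : w.im ≤ 1) : DifferentiableAt ℂ lowerF w := by
  unfold lowerF
  refine DifferentiableAt.div (by fun_prop) (by fun_prop) fun h => ?_
  have := congrArg im h
  simp at this
  linarith

lemma norm_exp_neg_I_mul (w : ℂ) : ‖exp (-I * w)‖ = Real.exp w.im := by
  rw [norm_exp]; simp

lemma exp_neg_I_mul_im_neg {w : ℂ} (h0 : 0 < w.re) (hpi : w.re < Real.pi) :
    (exp (-I * w)).im < 0 := by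
  rw [exp_im]
  have : 0 < Real.sin w.re := Real.sin_pos_of_pos_of_lt_pi h0 hpi
  simp
  positivity

lemma upperQ_denom {R : ℝ} {w : ℂ} (h0 : 0 < w.re) (hpi : w.re < Real.pi) :
    (R : ℂ) + exp (-I * w) ≠ 0 := by
  intro h
  have := congrArg im h
  have h2 := exp_neg_I_mul_im_neg h0 hpi
  rw [add_im, ofReal_im, zero_add, zero_im] at this
  linarith

lemma upperQ_im_pos {R : ℝ} (hR : 0 < R) {w : ℂ} (h0 : 0 < w.re) (hpi : w.re < Real.pi) :
    0 < (upperQ R w).im := by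
  have h2 := exp_neg_I_mul_im_neg h0 hpi
  have h3 := normSq_pos.2 (upperQ_denom (R := R) h0 hpi)
  rw [upperQ, div_im, ← sub_div]
  apply div_pos _ h3
  simp only [sub_im, add_im, sub_re, add_re, ofReal_im, ofReal_re]
  nlinarith

lemma upperQ_re_nonpos {R : ℝ} (hR : 0 < R) {w : ℂ} (hw : R ≤ Real.exp w.im) :
    (upperQ R w).re ≤ 0 := by
  rw [← norm_exp_neg_I_mul] at hw
  rw [upperQ, div_re, ← add_div]
  apply div_nonpos_of_nonpos_of_nonneg _ (normSq_nonneg _)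
  have h4 : R ^ 2 ≤ ‖exp (-I * w)‖ ^ 2 := by gcongr
  rw [← normSq_eq_norm_sq, normSq_apply] at h4
  simp only [sub_im, add_im, sub_re, add_re, ofReal_im, ofReal_re]
  nlinarith

lemma upperF_re (R : ℝ) (w : ℂ) : (upperF R w).re = 505 + R * arg (upperQ R w) := by
  simp [upperF, log_im]

lemma upperF_re_ge {R : ℝ} (hR : 0 < R) {w : ℂ} (h0 : 0 < w.re) (hpi : w.re < Real.pi) :
    505 ≤ (upperF R w).re := by
  rw [upperF_re]
  have := arg_nonneg_iff.2 (upperQ_im_pos hR h0 hpi).le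
  nlinarith [mul_nonneg hR.le this]

/-- Large values above height `log R`. -/
lemma upperF_re_ge' {R : ℝ} (hR : 0 < R) {w : ℂ} (h0 : 0 < w.re) (hpi : w.re < Real.pi)
    (hw : R ≤ Real.exp w.im) : R ≤ (upperF R w).re := by
  rw [upperF_re]
  have h1 := upperQ_im_pos hR h0 hpi
  have h2 := upperQ_re_nonpos hR hw
  have h3 : Real.pi / 2 ≤ arg (upperQ R w) := by
    by_contra! h
    rcases arg_lt_pi_div_two_iff.1 h with h | h | h
    · linarith
    · linarith
    · rw [h] at h1; simp at h1
  have := Real.pi_gt_three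
  nlinarith

/-- The argument of `upperQ R w = 1 - 2e/(R+e)`, `|e| = exp (Im w)`, is `O(1/R)` for `Im w ≤ 1`, so
multiplication by `R` leaves a bounded quantity. -/
lemma upperF_re_lt {R : ℝ} (hR : 15 ≤ R) {w : ℂ} (h0 : 0 < w.re) (hpi : w.re < Real.pi)
    (hw : w.im ≤ 1) : (upperF R w).re < 522 := by
  have he : ‖exp (-I * w)‖ ≤ 2.72 := by
    rw [norm_exp_neg_I_mul]
    have := Real.exp_one_lt_d9
    have := Real.exp_le_exp.2 hw
    linarith
  set e := exp (-I * w) with hedef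
  have hd : (R : ℂ) + e ≠ 0 := upperQ_denom h0 hpi
  have hq : upperQ R w = 1 + (-2 * e / (R + e)) := by
    rw [upperQ, ← hedef]; field_simp; ring
  have hdn : R - 2.72 ≤ ‖(R : ℂ) + e‖ := by
    have := norm_sub_norm_le (R : ℂ) (-e)
    rw [norm_neg, sub_neg_eq_add, norm_real, Real.norm_of_nonneg (by linarith)] at this
    linarith
  have hpos : 0 < R - 2.72 := by linarith
  have hn : ‖-2 * e / (R + e)‖ ≤ 5.44 / (R - 2.72) := by
    rw [norm_div]
    apply div_le_div₀ (by norm_num) _ hpos hdn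
    rw [norm_mul]; norm_num; linarith
  have hhalf : ‖-2 * e / (R + e)‖ ≤ 1 / 2 := by
    refine hn.trans ?_
    rw [div_le_div_iff₀ hpos (by norm_num)]; linarith
  have hlog := norm_log_one_add_half_le_self hhalf
  rw [← hq] at hlog
  have harg : arg (upperQ R w) ≤ 3 / 2 * (5.44 / (R - 2.72)) := by
    rw [← log_im]
    exact ((le_abs_self _).trans (abs_im_le_norm _)).trans (hlog.trans (by gcongr))
  rw [upperF_re]
  have h5 : R * arg (upperQ R w) ≤ R * (3 / 2 * (5.44 / (R - 2.72))) := by gcongr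
  have h6 : R * (3 / 2 * (5.44 / (R - 2.72))) < 17 := by
    rw [show R * (3 / 2 * (5.44 / (R - 2.72))) = (R * (3 / 2 * 5.44)) / (R - 2.72) by ring,
      div_lt_iff₀ hpos]
    linarith
  linarith

lemma upperF_differentiableAt {R : ℝ} (hR : 0 < R) {w : ℂ} (h0 : 0 < w.re)
    (hpi : w.re < Real.pi) : DifferentiableAt ℂ (upperF R) w := by
  have hq : DifferentiableAt ℂ (upperQ R) w := by
    unfold upperQ
    exact DifferentiableAt.div (by fun_prop) (by fun_prop) (upperQ_denom h0 hpi)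
  unfold upperF
  exact (differentiableAt_const _).sub ((hq.clog
    (mem_slitPlane_iff.2 (Or.inr (upperQ_im_pos hR h0 hpi).ne'))).const_mul _)

/-- For `R ≥ 15`, a positive superharmonic function on `{0 < Re w < π} ∪ {Im w < 0}`, at most `500` on `Im w ≤ 0`
and at least `R` on `Im w ≥ log R`. The lower function is the smaller one at height `0` and the upper
function is the smaller one at height `1`, so their minimum glues them together. -/
def barrier (R : ℝ) (w : ℂ) : ℝ :=
  if w.im ≤ 0 then (lowerF w).re
  else if w.im < 1 then min (lowerF w).re (upperF R w).re
  else (upperF R w).re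

lemma barrier_nonneg {R : ℝ} (hR : 0 < R) {w : ℂ}
    (hw : (0 < w.re ∧ w.re < Real.pi) ∨ w.im < 0) : 0 ≤ barrier R w := by
  unfold barrier
  split_ifs with h1 h2
  · exact lowerF_re_nonneg (by linarith)
  · have hs := hw.resolve_right (by linarith)
    exact le_min (lowerF_re_nonneg h2.le)
      (le_trans (by norm_num) (upperF_re_ge hR hs.1 hs.2))
  · have hs := hw.resolve_right (by linarith)
    exact le_trans (by norm_num) (upperF_re_ge hR hs.1 hs.2)

lemma barrier_ge {R : ℝ} (hR : 15 ≤ R) {w : ℂ}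
    (hw : (0 < w.re ∧ w.re < Real.pi) ∨ w.im < 0) (h : R ≤ Real.exp w.im) :
    R ≤ barrier R w := by
  have h1 : ¬ w.im < 1 := by
    intro h1
    have := Real.exp_lt_exp.2 h1
    have := Real.exp_one_lt_d9
    linarith
  have hs := hw.resolve_right (by linarith)
  rw [barrier, if_neg (by linarith), if_neg h1]
  exact upperF_re_ge' (by linarith) hs.1 hs.2 h

/-- Superharmonicity of the barrier. The strict inequalities between the two pieces at the heights
`0` and `1` make the barrier agree with a single piece near those heights. -/
lemma barrier_locMin {R : ℝ} (hR : 15 ≤ R) {w : ℂ}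
    (hw : (0 < w.re ∧ w.re < Real.pi) ∨ w.im < 0) : LocMin (barrier R) w := by
  have hR0 : 0 < R := by linarith
  have hlow : w.im < 1 → ∀ᶠ z in 𝓝 w, DifferentiableAt ℂ lowerF z := fun h =>
    (continuous_im.continuousAt.eventually_lt_const h).mono fun z hz =>
      lowerF_differentiableAt hz.le
  rcases lt_or_ge w.im 0 with h0 | h0
  · refine .of_eventuallyEq (hlow (by linarith)) ?_
    filter_upwards [continuous_im.continuousAt.eventually_lt_const h0] with z hz
    rw [barrier, if_pos hz.le]
  have hs := hw.resolve_right (by linarith)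
  have hstrip : ∀ᶠ z : ℂ in 𝓝 w, 0 < z.re ∧ z.re < Real.pi :=
    (continuous_re.continuousAt.eventually_const_lt hs.1).and
      (continuous_re.continuousAt.eventually_lt_const hs.2)
  have hupp : ∀ᶠ z in 𝓝 w, DifferentiableAt ℂ (upperF R) z :=
    hstrip.mono fun z hz => upperF_differentiableAt hR0 hz.1 hz.2
  have hcu : ContinuousAt (fun z => (upperF R z).re) w :=
    continuous_re.continuousAt.comp hupp.self_of_nhds.continuousAt
  rcases h0.eq_or_lt with h0 | h0
  · have hl := hlow (by linarith)
    have hcl : ContinuousAt (fun z => (lowerF z).re) w :=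
      continuous_re.continuousAt.comp hl.self_of_nhds.continuousAt
    refine .of_eventuallyEq hl ?_
    have hlt : (lowerF w).re < (upperF R w).re := by
      have := lowerF_re_le h0.ge
      have := upperF_re_ge hR0 hs.1 hs.2
      linarith
    filter_upwards [hcl.eventually_lt hcu hlt,
      continuous_im.continuousAt.eventually_lt_const (h0.symm.trans_lt one_pos)] with z h1 h2
    rw [barrier, if_pos h2, min_eq_left h1.le, ite_self]
  rcases lt_or_ge w.im 1 with h1 | h1
  · refine ⟨lowerF, upperF R, hlow h1, hupp, ?_⟩
    filter_upwards [continuous_im.continuousAt.eventually_lt_const h1,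
      continuous_im.continuousAt.eventually_const_lt h0] with z h1 h2
    rw [barrier, if_neg h2.not_ge, if_pos h1]
  refine .of_eventuallyEq hupp ?_
  rcases h1.eq_or_lt with h1 | h1
  · have hcl : ContinuousAt (fun z => (lowerF z).re) w :=
      continuous_re.continuousAt.comp (lowerF_differentiableAt h1.ge).continuousAt
    have hlt : (upperF R w).re < (lowerF w).re :=
      (upperF_re_lt hR hs.1 hs.2 h1.ge).trans_le (lowerF_re_ge h1.symm hs.1 hs.2)
    filter_upwards [hcu.eventually_lt hcl hlt,
      continuous_im.continuousAt.eventually_const_lt h0] with z h1 h2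
    rw [barrier, if_neg h2.not_ge, min_eq_right h1.le, ite_self]
  · filter_upwards [continuous_im.continuousAt.eventually_const_lt h1] with z h1
    rw [barrier, if_neg (by linarith), if_neg h1.not_gt]

/-! ### The estimate for analytic functions -/

/-- Markov's inequality for `barrier R ∘ f` on the circle of radius `r`. -/
lemma circle_estimate {f : ℂ → ℂ} (hf : DifferentiableOn ℂ f uD) (hf0 : (f 0).im < 0)
    (hfD : ∀ z ∈ uD, (0 < (f z).re ∧ (f z).re < Real.pi) ∨ (f z).im < 0)
    {R r : ℝ} (hR : 15 ≤ R) (hr : 0 < r) (hr1 : r < 1) :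
    volume {t ∈ Set.Ioc (0 : ℝ) (2 * Real.pi) |
      R ≤ Real.exp (f ((r : ℂ) * exp (t * I))).im} ≤
        ENNReal.ofReal (2 * Real.pi * (500 / R)) := by
  have hR0 : 0 < R := by linarith
  have hsub : closedBall (0 : ℂ) r ⊆ uD := closedBall_subset_ball hr1
  have hu : ∀ z ∈ closedBall (0 : ℂ) r, LocMin (fun z => barrier R (f z)) z := fun z hz =>
    (barrier_locMin hR (hfD z (hsub hz))).comp
      (hf.eventually_differentiableAt (isOpen_ball.mem_nhds (hsub hz)))
  have havg := circleAverage_le hr hu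
  have h0 : barrier R (f 0) ≤ 500 := by
    rw [barrier, if_pos hf0.le]; exact lowerF_re_le hf0.le
  have hmem : ∀ t : ℝ, circleMap 0 r t ∈ uD := fun t =>
    hsub (circleMap_mem_closedBall 0 hr.le t)
  have hcont : ContinuousOn (fun z => barrier R (f z)) (sphere 0 r) := fun z hz =>
    (hu z (sphere_subset_closedBall hz)).continuousAt.continuousWithinAt
  have hint := hcont.circleIntegrable hr.le
  rw [Real.circleAverage_def, smul_eq_mul, inv_mul_le_iff₀ (by positivity),
    intervalIntegral.integral_of_le (by positivity)] at havg
  unfold CircleIntegrable at hint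
  rw [intervalIntegrable_iff_integrableOn_Ioc_of_le (by positivity)] at hint
  have hmark := mul_meas_ge_le_integral_of_nonneg
    (μ := volume.restrict (Ioc 0 (2 * Real.pi)))
    (f := fun t => barrier R (f (circleMap 0 r t)))
    (Eventually.of_forall fun t => barrier_nonneg hR0 (hfD _ (hmem t))) hint R
  have hle : {t ∈ Set.Ioc (0 : ℝ) (2 * Real.pi) |
      R ≤ Real.exp (f ((r : ℂ) * exp (t * I))).im} ⊆
      {t | R ≤ barrier R (f (circleMap 0 r t))} ∩ Ioc 0 (2 * Real.pi) := by
    rintro t ⟨ht, h⟩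
    refine ⟨?_, ht⟩
    have hz : circleMap 0 r t = (r : ℂ) * exp (t * I) := by simp [circleMap]
    rw [← hz] at h
    exact barrier_ge hR (hfD _ (hmem t)) h
  refine (measure_mono hle).trans ?_
  rw [← Measure.restrict_apply' measurableSet_Ioc]
  rw [← ofReal_measureReal]
  apply ENNReal.ofReal_le_ofReal
  rw [← mul_div_assoc, le_div_iff₀ hR0]
  have h2 : 2 * Real.pi * barrier R (f 0) ≤ 2 * Real.pi * 500 := by gcongr
  linarith

/-- Passage from values on circles to radial limits: up to a null set, the superlevel set of the
limit is contained in the lower limit of the superlevel sets along a sequence of radii. Nothing is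
assumed to be measurable. -/
lemma volume_liminf_le {F : ℝ → ℝ → ℝ} {G : ℝ → ℝ} {s : Set ℝ} {R y : ℝ} {B : ℝ≥0∞} (hRy : R < y)
    (hlim : ∀ᵐ t : ℝ, Tendsto (fun r => F r t) (𝓝[<] 1) (𝓝 (G t)))
    (hB : ∀ r : ℝ, 0 < r → r < 1 → volume {t ∈ s | R ≤ F r t} ≤ B) :
    volume {t ∈ s | y ≤ G t} ≤ B := by
  obtain ⟨ρ, -, hρ, hρ1⟩ := exists_seq_strictMono_tendsto' (show (0 : ℝ) < 1 by norm_num)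
  have hρlim : Tendsto ρ atTop (𝓝[<] 1) :=
    tendsto_nhdsWithin_iff.2 ⟨hρ1, Eventually.of_forall fun n => (hρ n).2⟩
  set A : ℕ → Set ℝ := fun n => {t ∈ s | ∀ k ≥ n, R ≤ F (ρ k) t} with hA
  have hmono : Monotone A := fun m n hmn t ht => ⟨ht.1, fun k hk => ht.2 k (hmn.trans hk)⟩
  have hle : {t ∈ s | y ≤ G t} ≤ᵐ[volume] ⋃ n, A n := by
    filter_upwards [hlim] with t ht h
    obtain ⟨hts, hty⟩ := h
    obtain ⟨n, hn⟩ := eventually_atTop.1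
      ((ht.comp hρlim).eventually_const_lt (hRy.trans_le hty))
    exact mem_iUnion.2 ⟨n, hts, fun k hk => (hn k hk).le⟩
  refine (measure_mono_ae hle).trans ?_
  rw [hmono.measure_iUnion]
  refine iSup_le fun n => (measure_mono ?_).trans (hB (ρ n) (hρ n).1 (hρ n).2)
  exact fun t ht => ⟨ht.1, ht.2 n le_rfl⟩

/- STATEMENT 9 -/
theorem stmt9 :
    ∃ κ : ℝ, 0 < κ ∧ ∀ (α : ℝ) (f : ℂ → ℂ) (g : ℝ → ℂ),
      DifferentiableOn ℂ f uD → IsRadialLimit f g →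
      (f 0).im < α →
      (∀ z ∈ uD, (0 < (f z).re ∧ (f z).re < Real.pi) ∨ (f z).im < α) →
      ∀ y : ℝ, α ≤ y →
        volume {t ∈ Set.Ioc (0 : ℝ) (2 * Real.pi) | y ≤ (g t).im} ≤
          ENNReal.ofReal (2 * Real.pi * (κ * Real.exp (α - y))) := by
  refine ⟨1500, by norm_num, fun α f g hf hg hf0 hfD y hy => ?_⟩
  have he : Real.exp 1 < 3 := Real.exp_one_lt_three
  -- The unit loss in height is what lets radial limits be replaced by values on circles.
  set R : ℝ := Real.exp (y - α - 1) with hRdef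
  have hR0 : 0 < R := Real.exp_pos _
  have hRe : Real.exp (α - y) * (R * Real.exp 1) = 1 := by
    rw [hRdef, ← Real.exp_add, ← Real.exp_add]; simp
  have hαy : 1 / R ≤ 3 * Real.exp (α - y) := by
    rw [div_le_iff₀ hR0]
    have := mul_pos (Real.exp_pos (α - y)) hR0
    nlinarith
  rcases lt_or_ge R 15 with hR | hR
  · -- For bounded `y - α` the full measure of the circle is already small enough.
    refine (measure_mono (sep_subset _ _)).trans ?_
    rw [Real.volume_Ioc]
    apply ENNReal.ofReal_le_ofReal
    have h1 : 1 / 15 ≤ 1 / R := by gcongr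
    have h2 : 1 ≤ 1500 * Real.exp (α - y) := by linarith
    nlinarith [Real.pi_pos]
  · refine volume_liminf_le (F := fun r t => (f ((r : ℂ) * exp (t * I))).im)
      (R := y - 1) (by linarith) ?_ fun r hr hr1 => ?_
    · filter_upwards [hg] with t ht
      exact (continuous_im.tendsto _).comp ht
    · have h := circle_estimate (f := fun z => f z - α * I) (hf.sub_const _) (by simpa using hf0)
        (fun z hz => by simpa using hfD z hz) hR hr hr1
      refine (measure_mono ?_).trans (h.trans (ENNReal.ofReal_le_ofReal ?_))
      · rintro t ⟨ht, h⟩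
        refine ⟨ht, Real.exp_le_exp.2 ?_⟩
        simp
        linarith
      · have : 500 / R = 500 * (1 / R) := by ring
        rw [this]
        gcongr 2 * Real.pi * ?_
        linarith

end
end

section
/- Let 𝔤 : (0,∞) → (0,∞) be continuous and non-increasing with lim_{t→0⁺} 𝔤(t) = +∞ and lim_{t→+∞} 𝔤(t) = 0, and let 𝔥 : (0,∞) → (0,∞] be lower semicontinuous with M := sup{𝔥(t) : t ≥ π} < ∞. Assume Ω = {x + iy : x ∈ (0,∞) and 𝔤(x) < y < 𝔤(x) + 𝔥(x)} is a simply connected domain, and let 𝔣 : D → Ω be a conformal bijection with 𝔣(0) = π + i(𝔤(π) + 𝔥(π)/2). Define the Schur function φ(z) = exp(−𝔣(z)), z ∈ D. Then there exist ε₀ > 0 and k₀ > 0 such that for all h ∈ (0, ε₀): m({z ∈ T : |φ*(z)| > 1 − h}) ≤ k₀ exp(−𝔤(2h)). -/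
/-!
Write `b = g π + M`. The graph condition forces every point of `Ω` with real part at least `π` to lie
below height `b`, so `Ω` is contained in the union of the strips `0 < Re z < π` and `0 < Im z < b`.

*Radial limits.* Since `1 / |1 + w|²` has finite integral over this union of strips and `𝔣` is
injective, the area formula shows that `log (1 + 𝔣)` has finite Dirichlet integral
(`lintegral_deriv_log_lt_top`). In polar coordinates its derivative is then integrable along almost
every radius (`ae_exists_radial_limit`), so `log (1 + 𝔣)`, and with it `𝔣` and `φ = exp (-𝔣)`, has a
radial limit in almost every direction.

*The estimate.* Put `Y = g (2h)` and `ζ = exp (-i z - Y)`, and consider the harmonic function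
`V = -Im log ((1 + ζ) / (1 - ζ))` (see `stripLog`). It is positive on the strip `0 < Re z < π`, and at
least `π/2` there when `Im z ≥ Y`. At points of height at most `b` one has `|ζ| ≤ exp (b - Y) ≤ 1/8`,
so that `|V| ≤ 4 exp (b - Y)`. Hence `V + 4 exp (b - Y)` is a nonnegative harmonic function on all of
`Ω`, of size at most `8 exp (b - Y)` at `𝔣 0`. If `|φ| > 1 - h` at a point, then `Re 𝔣 < 2h` there,
so `Im 𝔣 > g (Re 𝔣) ≥ Y` and `V ∘ 𝔣 ≥ π/2`. The mean value property of `V ∘ 𝔣` on circles of radius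
`r < 1` and Markov's inequality (`volume_circle_le`) bound the measure of this set by a multiple of
`exp (b - Y)` uniformly in `r`, and the bound survives the passage `r → 1`
(`volume_superlevel_le_of_radial`).
-/

open Complex MeasureTheory Metric Set Filter Topology
open scoped ENNReal NNReal

noncomputable section

/-! ### Radial limits -/

lemma exists_tendsto_of_hasDerivAt_of_integrableOn {f G : ℝ → ℂ} {a b : ℝ} (hab : a < b)
    (hderiv : ∀ r ∈ Ico a b, HasDerivAt f (G r) r) (hint : IntegrableOn G (Ioo a b)) :
    ∃ l, Tendsto f (𝓝[<] b) (𝓝 l) := by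
  have hint' : IntegrableOn G (uIcc a b) := by
    rw [uIcc_of_le hab.le]
    exact (integrableOn_Icc_iff_integrableOn_Ioo).2 hint
  have hcont := (intervalIntegral.continuousOn_primitive_interval hint' b
    (by simp)).mono_of_mem_nhdsWithin (s := Iio b) (by
      rw [uIcc_of_le hab.le]
      exact mem_of_superset (Ioo_mem_nhdsLT hab) Ioo_subset_Icc_self)
  refine ⟨f a + ∫ x in a..b, G x, ?_⟩
  refine (tendsto_const_nhds.add hcont.tendsto).congr' ?_
  filter_upwards [Ioo_mem_nhdsLT hab] with r hr
  rw [intervalIntegral.integral_eq_sub_of_hasDerivAt (f := f)]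
  · ring
  · intro x hx
    rw [uIcc_of_le hr.1.le] at hx
    exact hderiv x ⟨hx.1, lt_of_le_of_lt hx.2 hr.2⟩
  · refine (hint'.mono_set ?_).intervalIntegrable
    rw [uIcc_of_le hab.le, uIcc_of_le hr.1.le]
    exact Icc_subset_Icc_right hr.2.le

lemma exists_radial_limit_of_integrable {L : ℂ → ℂ} (hL : DifferentiableOn ℂ L uD) (t : ℝ)
    (hfin : ∫⁻ r in Ioi (0 : ℝ), ENNReal.ofReal r *
      uD.indicator (fun z => ENNReal.ofReal (‖deriv L z‖ ^ 2)) (r * exp (t * I)) < ⊤) :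
    ∃ l, Tendsto (fun r : ℝ => L (r * exp (t * I))) (𝓝[<] 1) (𝓝 l) := by
  have hmem : ∀ r ∈ Ico (1 / 2 : ℝ) 1, (r : ℂ) * exp (t * I) ∈ uD := by
    intro r hr
    simp only [uD, mem_ball_zero_iff, norm_mul, norm_exp_ofReal_mul_I, norm_real, mul_one,
      Real.norm_eq_abs]
    rw [abs_of_nonneg (by linarith [hr.1])]
    exact hr.2
  set G : ℝ → ℂ := fun r => deriv L (r * exp (t * I)) * exp (t * I) with hG
  have hderiv : ∀ r ∈ Ico (1 / 2 : ℝ) 1, HasDerivAt (fun r : ℝ => L (r * exp (t * I))) (G r) r := by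
    intro r hr
    have h1 : HasDerivAt L (deriv L (r * exp (t * I))) (r * exp (t * I)) :=
      (hL.differentiableAt (isOpen_ball.mem_nhds (hmem r hr))).hasDerivAt
    have h2 : HasDerivAt (fun r : ℝ => (r : ℂ) * exp (t * I)) (exp (t * I)) r := by
      simpa using (Complex.ofRealCLM.hasDerivAt (x := r)).mul_const (exp (t * I))
    exact h1.comp r h2
  have hGmeas : Measurable G := by
    have := measurable_deriv L
    fun_prop
  have hnorm : ∀ r, ‖G r‖ = ‖deriv L (r * exp (t * I))‖ := by
    intro r; simp [hG, norm_exp_ofReal_mul_I]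
  have hint : IntegrableOn G (Ioo (1 / 2 : ℝ) 1) := by
    refine ⟨hGmeas.aestronglyMeasurable, ?_⟩
    rw [hasFiniteIntegral_iff_norm]
    -- `|L'| ≤ 1 + 2 r |L'|²` for `r ≥ 1/2`
    have hle : ∀ r ∈ Ioo (1 / 2 : ℝ) 1, ENNReal.ofReal ‖G r‖ ≤ 1 + 2 * (ENNReal.ofReal r *
        uD.indicator (fun z => ENNReal.ofReal (‖deriv L z‖ ^ 2)) (r * exp (t * I))) := by
      intro r hr
      rw [indicator_of_mem (hmem r ⟨hr.1.le, hr.2⟩), hnorm, ← ENNReal.ofReal_mul (by linarith [hr.1]),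
        ← ENNReal.ofReal_one, show (2 : ℝ≥0∞) = ENNReal.ofReal 2 by simp,
        ← ENNReal.ofReal_mul (by norm_num), ← ENNReal.ofReal_add (by norm_num)]
      · apply ENNReal.ofReal_le_ofReal
        have := hr.1
        nlinarith [sq_nonneg (‖deriv L (r * exp (t * I))‖ - 1),
          mul_nonneg (sub_nonneg.2 hr.1.le) (sq_nonneg ‖deriv L (r * exp (t * I))‖)]
      · have := hr.1
        positivity
    calc ∫⁻ r in Ioo (1 / 2 : ℝ) 1, ENNReal.ofReal ‖G r‖
        ≤ ∫⁻ r in Ioo (1 / 2 : ℝ) 1, (1 + 2 * (ENNReal.ofReal r *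
        uD.indicator (fun z => ENNReal.ofReal (‖deriv L z‖ ^ 2)) (r * exp (t * I)))) :=
          setLIntegral_mono' measurableSet_Ioo hle
      _ = volume (Ioo (1 / 2 : ℝ) 1) + 2 * ∫⁻ r in Ioo (1 / 2 : ℝ) 1, (ENNReal.ofReal r *
        uD.indicator (fun z => ENNReal.ofReal (‖deriv L z‖ ^ 2)) (r * exp (t * I))) := by
          rw [lintegral_add_left measurable_const, lintegral_const_mul' _ _ (by norm_num)]
          simp
      _ < ⊤ := by
          refine ENNReal.add_lt_top.2 ⟨by simp, ENNReal.mul_lt_top (by norm_num) ?_⟩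
          refine lt_of_le_of_lt (lintegral_mono_set ?_) hfin
          intro r hr
          exact lt_trans (by norm_num) hr.1
  exact exists_tendsto_of_hasDerivAt_of_integrableOn (by norm_num) hderiv hint

lemma ae_of_periodic_of_ae_Ioo {P : ℝ → Prop} (hper : ∀ t (k : ℤ), P t → P (t + k * (2 * Real.pi)))
    (hP : ∀ᵐ t ∂(volume.restrict (Ioo (-Real.pi) Real.pi)), P t) : ∀ᵐ t : ℝ, P t := by
  rw [ae_restrict_iff' measurableSet_Ioo] at hP
  have hend : ∀ᵐ t : ℝ, t ≠ Real.pi := by simp [ae_iff]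
  have hshift : ∀ᵐ t : ℝ, ∀ k : ℤ, (t + k * (2 * Real.pi) ∈ Ioo (-Real.pi) Real.pi →
      P (t + k * (2 * Real.pi))) ∧ t + k * (2 * Real.pi) ≠ Real.pi := by
    rw [ae_all_iff]
    intro k
    exact (measurePreserving_add_right volume ((k : ℝ) * (2 * Real.pi))).quasiMeasurePreserving.ae
      (hP.and hend)
  filter_upwards [hshift] with t ht
  obtain ⟨k, hk, -⟩ := existsUnique_add_zsmul_mem_Ioc Real.two_pi_pos t (-Real.pi)
  simp only [zsmul_eq_mul] at hk
  have h2 : t + k * (2 * Real.pi) ≤ Real.pi := by linarith [hk.2]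
  have h3 := hper _ (-k) ((ht k).1 ⟨hk.1, lt_of_le_of_ne h2 (ht k).2⟩)
  convert h3 using 1
  push_cast; ring

/-- A holomorphic function on the disk with finite Dirichlet integral has a finite radial limit in
almost every direction: in polar coordinates, `∫ |L'|² r dr` is finite for almost every angle, so
that the function has finite variation along almost every radius. -/
lemma ae_exists_radial_limit {L : ℂ → ℂ} (hL : DifferentiableOn ℂ L uD)
    (hfin : ∫⁻ z in uD, ENNReal.ofReal (‖deriv L z‖ ^ 2) < ⊤) :
    ∀ᵐ t : ℝ, ∃ l, Tendsto (fun r : ℝ => L (r * exp (t * I))) (𝓝[<] 1) (𝓝 l) := by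
  have huD : MeasurableSet uD := measurableSet_ball
  apply ae_of_periodic_of_ae_Ioo
  · rintro t k ⟨l, hl⟩
    refine ⟨l, ?_⟩
    have : exp (((t + k * (2 * Real.pi) : ℝ) : ℂ) * I) = exp (t * I) := by
      rw [← Complex.exp_periodic.int_mul k (t * I)]
      congr 1; push_cast; ring
    simpa only [this] using hl
  rw [← lintegral_indicator huD, ← Complex.lintegral_comp_polarCoord_symm,
    show polarCoord.target = Ioi (0 : ℝ) ×ˢ Ioo (-Real.pi) Real.pi from rfl, Measure.volume_eq_prod, ← Measure.prod_restrict] at hfin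
  set F : ℂ → ℝ≥0∞ := uD.indicator (fun z => ENNReal.ofReal (‖deriv L z‖ ^ 2)) with hF
  have hFm : Measurable F := by
    have := measurable_deriv L
    exact Measurable.indicator (by fun_prop) huD
  have hm : Measurable (fun p : ℝ × ℝ => ENNReal.ofReal p.1 * F (p.1 * exp (p.2 * I))) := by
    fun_prop
  have heq : ∀ p : ℝ × ℝ, ENNReal.ofReal p.1 • F (Complex.polarCoord.symm p) =
      ENNReal.ofReal p.1 * F (p.1 * exp (p.2 * I)) := by
    intro p
    rw [Complex.polarCoord_symm_apply, exp_mul_I]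
    simp
  simp_rw [heq] at hfin
  rw [lintegral_prod_symm' _ hm] at hfin
  filter_upwards [ae_lt_top (hm.lintegral_prod_left') hfin.ne] with t ht
  exact exists_radial_limit_of_integrable hL t ht

/-- The Jacobian of multiplication by `c`, the derivative of a holomorphic map. -/
lemma det_restrictScalars_toSpanSingleton (c : ℂ) :
    ((ContinuousLinearMap.toSpanSingleton ℂ c).restrictScalars ℝ : ℂ →L[ℝ] ℂ).det = ‖c‖ ^ 2 := by
  rw [← Complex.normSq_eq_norm_sq, ← Algebra.norm_complex_apply, Algebra.norm_apply,
    ContinuousLinearMap.det]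
  congr 1
  ext
  simp [mul_comm]

/-- The area of the image under `log (1 + ·)` of a union of two half-strips is finite. -/
lemma lintegral_strips_lt_top (b : ℝ) {Ω : Set ℂ}
    (hΩ : ∀ z ∈ Ω, 0 < z.re ∧ 0 < z.im ∧ (z.re < Real.pi ∨ z.im < b)) :
    ∫⁻ w in Ω, ENNReal.ofReal (‖1 + w‖ ^ 2)⁻¹ < ⊤ := by
  have hq : Measurable (fun x : ℝ => ENNReal.ofReal (1 + x ^ 2)⁻¹) := by fun_prop
  have hfin : ∫⁻ x : ℝ, ENNReal.ofReal (1 + x ^ 2)⁻¹ < ⊤ :=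
    integrable_inv_one_add_sq.lintegral_lt_top
  set K : ℝ × ℝ → ℝ≥0∞ := fun p =>
    (Ioo 0 Real.pi).indicator 1 p.1 * ENNReal.ofReal (1 + p.2 ^ 2)⁻¹ +
      ENNReal.ofReal (1 + p.1 ^ 2)⁻¹ * (Ioo 0 b).indicator 1 p.2 with hK
  have hi : ∀ c : ℝ, Measurable ((Ioo 0 c).indicator (1 : ℝ → ℝ≥0∞)) := fun c =>
    measurable_one.indicator measurableSet_Ioo
  have hKm : Measurable K := by
    have := hi Real.pi
    have := hi b
    fun_prop
  have hKfin : ∫⁻ p, K p < ⊤ := by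
    have h1 : Measurable fun p : ℝ × ℝ =>
      (Ioo 0 Real.pi).indicator (1 : ℝ → ℝ≥0∞) p.1 * ENNReal.ofReal (1 + p.2 ^ 2)⁻¹ := by
      have := hi Real.pi
      fun_prop
    rw [lintegral_add_left h1, Measure.volume_eq_prod,
      lintegral_prod_mul (hi _).aemeasurable hq.aemeasurable,
      lintegral_prod_mul hq.aemeasurable (hi _).aemeasurable,
      lintegral_indicator_one measurableSet_Ioo, lintegral_indicator_one measurableSet_Ioo]
    exact ENNReal.add_lt_top.2 ⟨ENNReal.mul_lt_top (by simp) hfin, ENNReal.mul_lt_top hfin (by simp)⟩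
  have hmp := Complex.volume_preserving_equiv_real_prod
  calc ∫⁻ w in Ω, ENNReal.ofReal (‖1 + w‖ ^ 2)⁻¹
      ≤ ∫⁻ w in Ω, K (Complex.measurableEquivRealProd w) := by
        refine setLIntegral_mono (hKm.comp Complex.measurableEquivRealProd.measurable) ?_
        intro w hw
        obtain ⟨h1, h2, h3⟩ := hΩ w hw
        have hn : ‖1 + w‖ ^ 2 = (1 + w.re) ^ 2 + w.im ^ 2 := by
          rw [← Complex.normSq_eq_norm_sq, Complex.normSq_apply]
          simp; ring
        rcases h3 with h3 | h3
        · refine le_trans ?_ le_self_add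
          simp only [Complex.measurableEquivRealProd_apply]
          rw [indicator_of_mem (mem_Ioo.2 ⟨h1, h3⟩), Pi.one_apply, one_mul]
          apply ENNReal.ofReal_le_ofReal
          apply inv_anti₀ (by positivity)
          nlinarith
        · refine le_trans ?_ le_add_self
          simp only [Complex.measurableEquivRealProd_apply]
          rw [indicator_of_mem (mem_Ioo.2 ⟨h2, h3⟩), Pi.one_apply, mul_one]
          apply ENNReal.ofReal_le_ofReal
          apply inv_anti₀ (by positivity)
          nlinarith
    _ ≤ ∫⁻ w, K (Complex.measurableEquivRealProd w) := setLIntegral_le_lintegral _ _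
    _ = ∫⁻ p, K p := hmp.lintegral_comp hKm
    _ < ⊤ := hKfin

/-- `log (1 + 𝔣)` has finite Dirichlet integral: as `𝔣` is injective, this integral is the area of
the image of `Ω` under `log (1 + ·)`. -/
lemma lintegral_deriv_log_lt_top {𝔣 : ℂ → ℂ} {Ω : Set ℂ} (b : ℝ) (h𝔣 : DifferentiableOn ℂ 𝔣 uD)
    (hbij : BijOn 𝔣 uD Ω)
    (hΩ : ∀ z ∈ Ω, 0 < z.re ∧ 0 < z.im ∧ (z.re < Real.pi ∨ z.im < b)) :
    DifferentiableOn ℂ (fun z => log (1 + 𝔣 z)) uD ∧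
    ∫⁻ z in uD, ENNReal.ofReal (‖deriv (fun z => log (1 + 𝔣 z)) z‖ ^ 2) < ⊤ := by
  have hda : ∀ z ∈ uD, HasDerivAt 𝔣 (deriv 𝔣 z) z := fun z hz =>
    (h𝔣.differentiableAt (isOpen_ball.mem_nhds hz)).hasDerivAt
  have hlog : ∀ z ∈ uD, HasDerivAt (fun z => log (1 + 𝔣 z)) (deriv 𝔣 z / (1 + 𝔣 z)) z := by
    intro z hz
    refine ((hda z hz).const_add 1).clog (Or.inl ?_)
    have := (hΩ _ (hbij.mapsTo hz)).1
    simp only [add_re, one_re]; linarith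
  refine ⟨fun z hz => (hlog z hz).differentiableAt.differentiableWithinAt, ?_⟩
  have harea := lintegral_image_eq_lintegral_abs_det_fderiv_mul (volume : Measure ℂ)
    (s := uD) measurableSet_ball
    (fun z hz => ((hda z hz).hasFDerivAt.restrictScalars ℝ).hasFDerivWithinAt) hbij.injOn
    (fun w => ENNReal.ofReal (‖1 + w‖ ^ 2)⁻¹)
  rw [hbij.image_eq] at harea
  have hlt := lintegral_strips_lt_top b hΩ
  rw [harea] at hlt
  refine lt_of_le_of_lt (le_of_eq (setLIntegral_congr_fun measurableSet_ball ?_)) hlt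
  intro z hz
  simp only [det_restrictScalars_toSpanSingleton]
  rw [(hlog z hz).deriv, abs_of_nonneg (by positivity), ← ENNReal.ofReal_mul (by positivity),
    norm_div, div_pow, div_eq_mul_inv]

/-! ### A harmonic function on the strip -/

/-- The map `ζ = exp (-i z - Y)`, with `|ζ| = exp (Im z - Y)`; it sends the strip `0 < Re z < π`
conformally onto the lower half-plane, and the line `Im z = Y` to the unit circle. -/
def stripExp (Y : ℝ) (z : ℂ) : ℂ := exp (-I * z - Y)

/-- The function `log ((1 + ζ) / (1 - ζ))`, `ζ = exp (-i z - Y)`, with the principal logarithm. On the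
strip `0 < Re z < π`, `-Im` of it is `π/2` times the harmonic measure of the segment at height `Y`
when `Im z < Y`, and is at least `π/2` above that height. -/
def stripLog (Y : ℝ) (z : ℂ) : ℂ := log ((1 + stripExp Y z) / (1 - stripExp Y z))

lemma norm_stripExp (Y : ℝ) (z : ℂ) : ‖stripExp Y z‖ = Real.exp (z.im - Y) := by
  simp [stripExp, Complex.norm_exp]

lemma stripExp_im_neg {Y : ℝ} {z : ℂ} (h0 : 0 < z.re) (h1 : z.re < Real.pi) :
    (stripExp Y z).im < 0 := by
  have : (-I * z - Y).im = -z.re := by simp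
  rw [stripExp, Complex.exp_im, this, Real.sin_neg]
  have := mul_pos (Real.exp_pos (-I * z - Y).re) (Real.sin_pos_of_pos_of_lt_pi h0 h1)
  linarith

lemma cayley_re (w : ℂ) : ((1 + w) / (1 - w)).re = (1 - ‖w‖ ^ 2) / normSq (1 - w) := by
  rw [Complex.div_re, ← Complex.normSq_eq_norm_sq, Complex.normSq_apply w]
  simp; ring

lemma cayley_im (w : ℂ) : ((1 + w) / (1 - w)).im = 2 * w.im / normSq (1 - w) := by
  rw [Complex.div_im]
  simp; ring

lemma cayley_mem_slitPlane {w : ℂ} (h : w.im < 0 ∨ ‖w‖ < 1) :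
    1 - w ≠ 0 ∧ (1 + w) / (1 - w) ∈ slitPlane := by
  have h1 : 1 - w ≠ 0 := by
    intro h0
    have : w = 1 := (sub_eq_zero.1 h0).symm
    subst this
    simp at h
  refine ⟨h1, ?_⟩
  have hp : 0 < normSq (1 - w) := Complex.normSq_pos.2 h1
  rcases h with h | h
  · right
    rw [cayley_im]
    exact (div_neg_of_neg_of_pos (by linarith) hp).ne
  · left
    rw [cayley_re]
    exact div_pos (by nlinarith [norm_nonneg w]) hp

lemma norm_log_cayley_le {w : ℂ} (h : ‖w‖ ≤ 1 / 8) : ‖log ((1 + w) / (1 - w))‖ ≤ 4 * ‖w‖ := by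
  have h1 : 7 / 8 ≤ ‖1 - w‖ := by
    have := norm_sub_norm_le (1 : ℂ) w
    rw [norm_one] at this; linarith
  have h0 : 1 - w ≠ 0 := by
    intro h0; rw [h0, norm_zero] at h1; linarith
  have he : (1 + w) / (1 - w) = 1 + 2 * w / (1 - w) := by
    field_simp; ring
  have hn : ‖2 * w / (1 - w)‖ ≤ 16 / 7 * ‖w‖ := by
    rw [norm_div, norm_mul, div_le_iff₀ (by linarith)]
    simp only [Complex.norm_ofNat]
    nlinarith [norm_nonneg w]
  rw [he]
  have := norm_log_one_add_half_le_self (z := 2 * w / (1 - w)) (by linarith)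
  linarith [norm_nonneg w]

lemma abs_stripLog_im_le {Y b : ℝ} {z : ℂ} (hY : Real.exp (b - Y) ≤ 1 / 8) (hz : z.im ≤ b) :
    |(stripLog Y z).im| ≤ 4 * Real.exp (b - Y) := by
  have h1 : ‖stripExp Y z‖ ≤ Real.exp (b - Y) := by
    rw [norm_stripExp]; exact Real.exp_le_exp.2 (by linarith)
  calc |(stripLog Y z).im| ≤ ‖stripLog Y z‖ := Complex.abs_im_le_norm _
    _ ≤ 4 * ‖stripExp Y z‖ := norm_log_cayley_le (h1.trans hY)
    _ ≤ _ := by linarith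

lemma cayley_stripExp_im_neg {Y : ℝ} {z : ℂ} (h0 : 0 < z.re) (h1 : z.re < Real.pi) :
    ((1 + stripExp Y z) / (1 - stripExp Y z)).im < 0 := by
  have h := stripExp_im_neg (Y := Y) h0 h1
  rw [cayley_im]
  exact div_neg_of_neg_of_pos (by linarith)
    (Complex.normSq_pos.2 (cayley_mem_slitPlane (Or.inl h)).1)

/-- Up to an error of order `exp (-Y)`, the function `-Im (stripLog Y)` stays nonnegative on the part
of the domain that leaves the strip `0 < Re z < π`, since that part lies below height `b`. -/
lemma neg_stripLog_im_nonneg {Y b : ℝ} {z : ℂ} (hY : Real.exp (b - Y) ≤ 1 / 8)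
    (h0 : 0 < z.re) (hz : z.re < Real.pi ∨ z.im < b) :
    0 ≤ -(stripLog Y z).im + 4 * Real.exp (b - Y) := by
  rcases hz with hz | hz
  · have := Complex.arg_neg_iff.2 (cayley_stripExp_im_neg (Y := Y) h0 hz)
    rw [stripLog, Complex.log_im]
    linarith [Real.exp_pos (b - Y)]
  · linarith [(abs_le.1 (abs_stripLog_im_le hY hz.le)).2]

lemma pi_div_two_le_neg_stripLog_im {Y : ℝ} {z : ℂ} (h0 : 0 < z.re) (h1 : z.re < Real.pi)
    (hz : Y ≤ z.im) : Real.pi / 2 ≤ -(stripLog Y z).im := by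
  have him := cayley_stripExp_im_neg (Y := Y) h0 h1
  have hn : 1 ≤ ‖stripExp Y z‖ := by
    rw [norm_stripExp]; exact Real.one_le_exp (by linarith)
  have hre : ((1 + stripExp Y z) / (1 - stripExp Y z)).re ≤ 0 := by
    rw [cayley_re]
    exact div_nonpos_of_nonpos_of_nonneg (by nlinarith) (Complex.normSq_nonneg _)
  rw [stripLog, Complex.log_im]
  have ha := Complex.arg_neg_iff.2 him
  by_contra! hc
  have : |arg ((1 + stripExp Y z) / (1 - stripExp Y z))| < Real.pi / 2 := by
    rw [abs_of_neg ha]; exact hc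
  rcases Complex.abs_arg_lt_pi_div_two_iff.1 this with h | h
  · linarith
  · rw [h] at him; simp at him

lemma differentiableAt_stripLog {Y b : ℝ} {z : ℂ} (hY : Real.exp (b - Y) ≤ 1 / 8)
    (h0 : 0 < z.re) (hz : z.re < Real.pi ∨ z.im < b) : DifferentiableAt ℂ (stripLog Y) z := by
  have h : (stripExp Y z).im < 0 ∨ ‖stripExp Y z‖ < 1 := by
    refine hz.imp (stripExp_im_neg h0) fun h => ?_
    rw [norm_stripExp]
    linarith [Real.exp_lt_exp.2 (by linarith : z.im - Y < b - Y)]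
  obtain ⟨h1, h2⟩ := cayley_mem_slitPlane h
  have hd : DifferentiableAt ℂ (stripExp Y) z := by unfold stripExp; fun_prop
  exact ((hd.const_add 1).div (hd.const_sub 1) h1).clog h2

/-- The mean value property on `|z| = r` and Markov's inequality for the nonnegative harmonic
function `-Im U + c`. The radial parametrization `t ↦ r exp (i t)` covers the circle once on
`(0, 2π]`; the factor `4` is `2π / (π/2)`. -/
lemma volume_circle_le {U : ℂ → ℂ} (hU : DifferentiableOn ℂ U uD) {c r : ℝ}
    (hr0 : 0 < r) (hr1 : r < 1) (hpos : ∀ z ∈ uD, 0 ≤ -(U z).im + c)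
    {E : Set ℝ} (hE : ∀ t ∈ E, Real.pi / 2 ≤ -(U (r * exp (t * I))).im + c) :
    volume (E ∩ Ioc 0 (2 * Real.pi)) ≤ ENNReal.ofReal (4 * (-(U 0).im + c)) := by
  have hpi := Real.pi_pos
  have hsub : closedBall (0 : ℂ) r ⊆ uD := closedBall_subset_ball hr1
  have hmem : ∀ t : ℝ, (r : ℂ) * exp (t * I) ∈ closedBall (0 : ℂ) r := by
    intro t
    simp [norm_exp_ofReal_mul_I, abs_of_pos hr0]
  have hcont : Continuous (fun t : ℝ => U (r * exp (t * I))) :=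
    hU.continuousOn.comp_continuous (by fun_prop) fun t => hsub (hmem t)
  have hdc : DiffContOnCl ℂ U (ball 0 |r|) := by
    rw [abs_of_pos hr0]
    exact DifferentiableOn.diffContOnCl (hU.mono (closure_ball_subset_closedBall.trans hsub))
  have hmean := hdc.circleAverage
  rw [Real.circleAverage_def] at hmean
  simp only [circleMap, zero_add] at hmean
  have hint : ∫ t in (0 : ℝ)..2 * Real.pi, U (r * exp (t * I)) = (2 * Real.pi : ℝ) • U 0 := by
    rw [← hmean, smul_smul, mul_inv_cancel₀ (by positivity), one_smul]
  have him : ∫ t in (0 : ℝ)..2 * Real.pi, (-(U (r * exp (t * I))).im + c) =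
      2 * Real.pi * (-(U 0).im + c) := by
    have h1 := Complex.imCLM.intervalIntegral_comp_comm
      (hcont.intervalIntegrable (μ := volume) 0 (2 * Real.pi))
    simp only [Complex.imCLM_apply] at h1
    rw [intervalIntegral.integral_add, intervalIntegral.integral_neg, h1, hint]
    · simp; ring
    · exact (Complex.continuous_im.comp hcont).neg.intervalIntegrable _ _
    · simp
  set v : ℝ → ℝ := fun t => -(U (r * exp (t * I))).im + c with hv
  have hvc : Continuous v := (Complex.continuous_im.comp hcont).neg.add continuous_const
  have hvpos : ∀ t, 0 ≤ v t := fun t => hpos _ (hsub (hmem t))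
  rw [intervalIntegral.integral_of_le (by positivity)] at him
  have hmarkov := mul_meas_ge_le_lintegral (μ := volume.restrict (Ioc 0 (2 * Real.pi)))
    (hvc.measurable.ennreal_ofReal) (ENNReal.ofReal (Real.pi / 2))
  rw [← ofReal_integral_eq_lintegral_ofReal
    ((hvc.intervalIntegrable 0 (2 * Real.pi)).1) (Eventually.of_forall hvpos), him] at hmarkov
  have hle : volume (E ∩ Ioc 0 (2 * Real.pi)) ≤ (volume.restrict (Ioc 0 (2 * Real.pi)))
      {t | ENNReal.ofReal (Real.pi / 2) ≤ ENNReal.ofReal (v t)} := by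
    refine le_trans (measure_mono ?_) (Measure.le_restrict_apply _ _)
    exact inter_subset_inter_left _ fun t ht => ENNReal.ofReal_le_ofReal (hE t ht)
  have h4 : 2 * Real.pi * (-(U 0).im + c) = Real.pi / 2 * (4 * (-(U 0).im + c)) := by ring
  rw [h4, ENNReal.ofReal_mul (by positivity)] at hmarkov
  exact hle.trans ((ENNReal.mul_le_mul_iff_right (by simpa using hpi) (by simp)).1 hmarkov)

/-! ### The boundary estimate -/

lemma re_lt_of_lt_norm_exp {w : ℂ} {s : ℝ} (hs0 : 0 < s) (hs : s < 1 / 2)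
    (h : 1 - s < ‖exp (-w)‖) : w.re < 2 * s := by
  by_contra! hc
  rw [Complex.norm_exp, neg_re] at h
  have h1 : Real.exp (-w.re) ≤ Real.exp (-(2 * s)) := Real.exp_le_exp.2 (by linarith)
  have h2 : Real.exp (-(2 * s)) ≤ 1 - s := by
    rw [Real.exp_neg, inv_le_comm₀ (Real.exp_pos _) (by linarith)]
    refine le_trans ?_ (Real.add_one_le_exp (2 * s))
    rw [inv_le_iff_one_le_mul₀ (by linarith)]
    nlinarith
  linarith

/-- A bound, uniform in `r < 1`, for the size of a superlevel set of `u` on the circle of radius `r`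
passes to the radial limit. -/
lemma volume_superlevel_le_of_radial {u : ℂ → ℝ} {us : ℝ → ℝ} {S : Set ℝ} {a : ℝ} {C : ℝ≥0∞}
    (hlim : ∀ᵐ t : ℝ, Tendsto (fun r : ℝ => u (r * exp (t * I))) (𝓝[<] 1) (𝓝 (us t)))
    (hC : ∀ r : ℝ, 0 < r → r < 1 → volume ({t : ℝ | a < u (r * exp (t * I))} ∩ S) ≤ C) :
    volume {t ∈ S | a < us t} ≤ C := by
  obtain ⟨ρ, -, hρ, hρlim⟩ := exists_seq_strictMono_tendsto' (zero_lt_one (α := ℝ))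
  have hρ' : Tendsto ρ atTop (𝓝[<] 1) :=
    tendsto_nhdsWithin_iff.2 ⟨hρlim, Eventually.of_forall fun n => (hρ n).2⟩
  set B : ℕ → Set ℝ := fun N => {t | ∀ n, N ≤ n → a < u (ρ n * exp (t * I))} ∩ S with hB
  have hmono : Monotone B := fun N N' hN =>
    inter_subset_inter_left _ fun t ht n hn => ht n (hN.trans hn)
  calc volume {t ∈ S | a < us t} ≤ volume (⋃ N, B N) := by
        refine measure_mono_ae ?_
        filter_upwards [hlim] with t ht hts
        have := (ht.comp hρ').eventually_const_lt hts.2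
        obtain ⟨N, hN⟩ := eventually_atTop.1 this
        exact mem_iUnion.2 ⟨N, hN, hts.1⟩
    _ = ⨆ N, volume (B N) := hmono.measure_iUnion
    _ ≤ C := by
        refine iSup_le fun N => le_trans (measure_mono ?_) (hC (ρ N) (hρ N).1 (hρ N).2)
        exact inter_subset_inter_left _ fun t ht => ht N le_rfl

/- STATEMENT 10 -/
theorem stmt10 (g : ℝ → ℝ) (h : ℝ → ℝ≥0∞)
    (hgpos : ∀ t : ℝ, 0 < t → 0 < g t)
    (hgc : ContinuousOn g (Set.Ioi 0)) (hgm : AntitoneOn g (Set.Ioi 0))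
    (hg0 : Filter.Tendsto g (𝓝[>] (0 : ℝ)) Filter.atTop)
    (hginf : Filter.Tendsto g Filter.atTop (𝓝 0))
    (hhpos : ∀ t : ℝ, 0 < t → 0 < h t)
    (hhlsc : LowerSemicontinuousOn h (Set.Ioi 0))
    (hM : (⨆ t ∈ Set.Ici Real.pi, h t) < ⊤)
    (Ω : Set ℂ)
    (hΩ : Ω = {z : ℂ | 0 < z.re ∧ g z.re < z.im ∧
      ENNReal.ofReal (z.im - g z.re) < h z.re})
    (𝔣 : ℂ → ℂ) (h𝔣 : DifferentiableOn ℂ 𝔣 uD) (hbij : Set.BijOn 𝔣 uD Ω)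
    (h𝔣0 : 𝔣 0 = (Real.pi : ℂ) +
      ((g Real.pi + (h Real.pi).toReal / 2 : ℝ) : ℂ) * Complex.I)
    (φ : ℂ → ℂ) (hφ : φ = fun z => Complex.exp (-𝔣 z)) :
    ∃ ε₀ : ℝ, 0 < ε₀ ∧ ∃ k₀ : ℝ, 0 < k₀ ∧ ∃ φs : ℝ → ℂ, IsRadialLimit φ φs ∧
      ∀ hh : ℝ, 0 < hh → hh < ε₀ →
        volume {t ∈ Set.Ioc (0 : ℝ) (2 * Real.pi) | 1 - hh < ‖φs t‖} ≤
          ENNReal.ofReal (2 * Real.pi * (k₀ * Real.exp (-g (2 * hh)))) := by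
  have hpi := Real.pi_pos
  set M : ℝ := (⨆ t ∈ Set.Ici Real.pi, h t).toReal with hMdef
  set b : ℝ := g Real.pi + M with hb
  have hle : ∀ t, Real.pi ≤ t → h t ≤ ⨆ t ∈ Set.Ici Real.pi, h t := fun t ht =>
    le_iSup₂ (f := fun t (_ : t ∈ Set.Ici Real.pi) => h t) t ht
  have hregion : ∀ z ∈ Ω, 0 < z.re ∧ 0 < z.im ∧ (z.re < Real.pi ∨ z.im < b) := by
    intro z hz
    rw [hΩ] at hz
    obtain ⟨h0, h1, h2⟩ := hz
    refine ⟨h0, (hgpos _ h0).trans h1, ?_⟩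
    by_cases hx : z.re < Real.pi
    · exact Or.inl hx
    right
    rw [not_lt] at hx
    have h3 : z.im - g z.re < M :=
      (ENNReal.ofReal_lt_iff_lt_toReal (by linarith) hM.ne).1 (h2.trans_le (hle _ hx))
    have h4 : g z.re ≤ g Real.pi := hgm hpi h0 hx
    linarith
  have h0mem : (0 : ℂ) ∈ uD := mem_ball_self one_pos
  have hbase : (𝔣 0).im ≤ b := by
    have h1 : (h Real.pi).toReal ≤ M := ENNReal.toReal_mono hM.ne (hle _ le_rfl)
    have h2 : 0 ≤ (h Real.pi).toReal := ENNReal.toReal_nonneg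
    rw [h𝔣0]
    simp only [add_im, ofReal_im, mul_im, ofReal_re, I_im, I_re]
    linarith
  -- `log (1 + 𝔣)` has finite radial limits, hence so do `𝔣` and `φ = exp (-𝔣)`
  have hlimex : ∀ᵐ t : ℝ, ∃ l, Tendsto (fun r : ℝ => φ (r * exp (t * I))) (𝓝[<] 1) (𝓝 l) := by
    obtain ⟨hd, hfin⟩ := lintegral_deriv_log_lt_top b h𝔣 hbij hregion
    filter_upwards [ae_exists_radial_limit hd hfin] with t ⟨l, hl⟩
    have hcont : Continuous fun w : ℂ => exp (-(exp w - 1)) := by fun_prop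
    refine ⟨_, ((hcont.tendsto l).comp hl).congr' ?_⟩
    filter_upwards [Ioo_mem_nhdsLT (zero_lt_one (α := ℝ))] with r hr
    have hmem : (r : ℂ) * exp (t * I) ∈ uD := by
      simpa [uD, norm_exp_ofReal_mul_I, abs_of_pos hr.1] using hr.2
    have hne : 1 + 𝔣 (r * exp (t * I)) ≠ 0 := by
      intro h0
      have h1 := congrArg re h0
      have h2 := (hregion _ (hbij.mapsTo hmem)).1
      simp only [add_re, one_re, zero_re] at h1
      linarith
    simp only [Function.comp, hφ, Complex.exp_log hne, add_sub_cancel_left]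
  obtain ⟨φs, hφs⟩ : ∃ φs : ℝ → ℂ, IsRadialLimit φ φs := by
    choose! φs hφs using fun (t : ℝ) (ht : ∃ l, Tendsto (fun r : ℝ => φ (r * exp (t * I)))
      (𝓝[<] 1) (𝓝 l)) => ht
    exact ⟨φs, hlimex.mono hφs⟩
  obtain ⟨δ, hδ, hδg⟩ : ∃ δ > 0, ∀ t ∈ Ioo 0 δ, b + Real.log 8 ≤ g t := by
    have := hg0.eventually_ge_atTop (b + Real.log 8)
    obtain ⟨δ, hδ, hsub⟩ := mem_nhdsGT_iff_exists_Ioo_subset.1 this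
    exact ⟨δ, hδ, fun t ht => hsub ht⟩
  -- the mean value bound below is `4 · 8 exp (b - Y)`, which is `2π k₀ exp (-Y)` for this `k₀`
  refine ⟨min (δ / 2) (1 / 2), by positivity, 16 / Real.pi * Real.exp b, by positivity, φs, hφs, ?_⟩
  intro hh hh0 hhε
  have hh1 : 2 * hh < δ := by linarith [min_le_left (δ / 2) (1 / 2 : ℝ)]
  have hh2 : hh < 1 / 2 := hhε.trans_le (min_le_right _ _)
  set Y : ℝ := g (2 * hh) with hYdef
  have hY : Real.exp (b - Y) ≤ 1 / 8 := by
    have h1 := hδg (2 * hh) ⟨by linarith, hh1⟩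
    calc Real.exp (b - Y) ≤ Real.exp (-Real.log 8) := Real.exp_le_exp.2 (by linarith)
      _ = 1 / 8 := by rw [Real.exp_neg, Real.exp_log (by norm_num)]; norm_num
  have hUd : DifferentiableOn ℂ (fun z => stripLog Y (𝔣 z)) uD := by
    intro z hz
    obtain ⟨h1, -, h2⟩ := hregion _ (hbij.mapsTo hz)
    exact (differentiableAt_stripLog hY h1 h2).comp_differentiableWithinAt z (h𝔣 z hz)
  have hUpos : ∀ z ∈ uD, 0 ≤ -(stripLog Y (𝔣 z)).im + 4 * Real.exp (b - Y) := by
    intro z hz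
    obtain ⟨h1, -, h2⟩ := hregion _ (hbij.mapsTo hz)
    exact neg_stripLog_im_nonneg hY h1 h2
  refine volume_superlevel_le_of_radial (u := fun z => ‖φ z‖) (us := fun t => ‖φs t‖)
    (hφs.mono fun t ht => ht.norm) ?_
  intro r hr0 hr1
  refine (volume_circle_le hUd hr0 hr1 hUpos ?_).trans (ENNReal.ofReal_le_ofReal ?_)
  · -- `|φ| > 1 - hh` forces `Re 𝔣 < 2 hh`, and then `Im 𝔣 > g (Re 𝔣) ≥ g (2 hh) = Y`
    intro t ht
    have hmem : (r : ℂ) * exp (t * I) ∈ uD := by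
      simpa [uD, norm_exp_ofReal_mul_I, abs_of_pos hr0] using hr1
    have hw := hbij.mapsTo hmem
    have ht' : 1 - hh < ‖exp (-𝔣 (r * exp (t * I)))‖ := by
      simpa only [hφ, mem_ofPred_eq] using ht
    have hre := re_lt_of_lt_norm_exp hh0 hh2 ht'
    rw [hΩ] at hw
    obtain ⟨h0, h1, -⟩ := hw
    have hge : Y ≤ g (𝔣 (r * exp (t * I))).re :=
      hgm h0 (by simpa using hh0) hre.le
    have := pi_div_two_le_neg_stripLog_im (Y := Y) h0 (by linarith [Real.pi_gt_three])
      (hge.trans h1.le)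
    linarith [Real.exp_pos (b - Y)]
  · have h1 := (abs_le.1 (abs_stripLog_im_le hY hbase)).1
    have h2 : Real.exp (b - Y) = Real.exp b * Real.exp (-Y) := by
      rw [← Real.exp_add]; congr 1
    have h3 : 2 * Real.pi * (16 / Real.pi * Real.exp b * Real.exp (-Y)) =
        32 * Real.exp (b - Y) := by
      rw [h2]; field_simp; ring
    rw [h3]
    linarith

end
end
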